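/- arXiv:1508.04386 — 6 statements merged into one kernel-verified Lean document; each statement's English description precedes it below -/
import Mathlib

section
/- Let h : ℂ → ℝ be a non-negative smooth function such that ‖h‖_{C^k(ℂ)} < ∞ for every k = 0,1,2,…. Then the following are equivalent: (a) sup_{ζ∈ℂ} sup_{r∈[1,∞)} | ∫_{1≤|η|≤r} h(ζ+η)/η² dm(η) | < ∞; (b) there exist constants A₁, A₂, A₃, … such that for every ζ ∈ ℂ there exists a smooth function P : ℂ → ℝ with P(0) = 0 satisfying (i) ΔP(z) = h(ζ+z) for all z ∈ ℂ, (ii) |∇P(z)| ≤ A₁|z| for all z ∈ ℂ, and (iii) for each k = 2,3,…, every partial derivative of P of order k is bounded in absolute value by A_k on ℂ. -/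
open MeasureTheory Complex

/-- The Laplacian of a function `P : ℂ → ℝ`, as the sum of the two pure second
partial derivatives in the directions `1` and `I`. -/
noncomputable def laplacian (P : ℂ → ℝ) (z : ℂ) : ℝ :=
  iteratedFDeriv ℝ 2 P z ![1, 1] + iteratedFDeriv ℝ 2 P z ![Complex.I, Complex.I]

section PotentialTheory

set_option maxSynthPendingDepth 5

/-- `f` is smooth, and its derivative of order `k` is bounded by `M k` for every `k`. -/
def BoundedSmooth {F : Type*} [NormedAddCommGroup F] [NormedSpace ℝ F] (f : ℂ → F) (M : ℕ → ℝ) :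
    Prop :=
  ContDiff ℝ (⊤ : ℕ∞) f ∧ ∀ k z, ‖iteratedFDeriv ℝ k f z‖ ≤ M k

namespace BoundedSmooth

variable {F G : Type*} [NormedAddCommGroup F] [NormedSpace ℝ F] [NormedAddCommGroup G]
  [NormedSpace ℝ G] {f g : ℂ → F} {M M' : ℕ → ℝ}

lemma norm_le (hf : BoundedSmooth f M) (z : ℂ) : ‖f z‖ ≤ M 0 := by
  simpa using hf.2 0 z

lemma nonneg (hf : BoundedSmooth f M) (k : ℕ) : 0 ≤ M k := (norm_nonneg _).trans (hf.2 k 0)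

lemma fderiv (hf : BoundedSmooth f M) : BoundedSmooth (fderiv ℝ f) (fun k => M (k + 1)) :=
  ⟨hf.1.fderiv_right (by exact_mod_cast le_top), fun k z => by
    rw [norm_iteratedFDeriv_fderiv]; exact hf.2 (k + 1) z⟩

lemma norm_fderiv_le (hf : BoundedSmooth f M) (z : ℂ) : ‖_root_.fderiv ℝ f z‖ ≤ M 1 :=
  hf.fderiv.norm_le z

lemma hasFDerivAt (hf : BoundedSmooth f M) (z : ℂ) : HasFDerivAt f (_root_.fderiv ℝ f z) z :=
  ((hf.1.differentiable (by simp)) z).hasFDerivAt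

lemma add (hf : BoundedSmooth f M) (hg : BoundedSmooth g M') :
    BoundedSmooth (fun z => f z + g z) (fun k => M k + M' k) := by
  refine ⟨hf.1.add hg.1, fun k z => ?_⟩
  have hk : (k : WithTop ℕ∞) ≤ ((⊤ : ℕ∞) : WithTop ℕ∞) := by exact_mod_cast le_top
  have := iteratedFDeriv_add_apply (𝕜 := ℝ) (x := z) (i := k)
    (hf.1.of_le hk).contDiffAt (hg.1.of_le hk).contDiffAt
  have h2 : iteratedFDeriv ℝ k (fun z => f z + g z) z = _ := this
  rw [h2]
  exact (norm_add_le _ _).trans (add_le_add (hf.2 k z) (hg.2 k z))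

lemma const_smul (hf : BoundedSmooth f M) (c : ℝ) :
    BoundedSmooth (fun z => c • f z) (fun k => |c| * M k) := by
  refine ⟨contDiff_const.smul hf.1, fun k z => ?_⟩
  have hk : (k : WithTop ℕ∞) ≤ ((⊤ : ℕ∞) : WithTop ℕ∞) := by exact_mod_cast le_top
  have := iteratedFDeriv_const_smul_apply (𝕜 := ℝ) (x := z) (i := k) (a := c)
    (hf.1.of_le hk).contDiffAt
  have h2 : iteratedFDeriv ℝ k (fun z => c • f z) z = _ := this
  rw [h2, norm_smul, Real.norm_eq_abs]
  exact mul_le_mul_of_nonneg_left (hf.2 k z) (abs_nonneg c)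

lemma const (c : F) : BoundedSmooth (fun _ => c) (fun _ => ‖c‖) := by
  refine ⟨contDiff_const, fun k z => ?_⟩
  rcases k with _ | k
  · simp
  · rw [iteratedFDeriv_const_of_ne (by simp)]; simp

lemma comp_const_add (hf : BoundedSmooth f M) (ζ : ℂ) :
    BoundedSmooth (fun z => f (ζ + z)) M := by
  refine ⟨hf.1.comp (contDiff_const.add contDiff_id), fun k z => ?_⟩
  rw [iteratedFDeriv_comp_add_left]
  exact hf.2 k _

/-- A function is boundedly smooth as soon as it is bounded and its derivative is boundedly
smooth. -/
lemma of_hasFDerivAt {f' : ℂ → ℂ →L[ℝ] F} {C : ℝ} (hf : ∀ z, HasFDerivAt f (f' z) z)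
    (hC : ∀ z, ‖f z‖ ≤ C) (hf' : BoundedSmooth f' M) :
    BoundedSmooth f (fun k => if k = 0 then C else M (k - 1)) := by
  have he : _root_.fderiv ℝ f = f' := funext fun z => (hf z).fderiv
  refine ⟨?_, fun k z => ?_⟩
  · rw [contDiff_infty_iff_fderiv, he]
    exact ⟨fun z => (hf z).differentiableAt, hf'.1⟩
  · rcases k with _ | k
    · simpa using hC z
    · rw [← norm_iteratedFDeriv_fderiv, he]
      simpa using hf'.2 k z

end BoundedSmooth

section Average

variable {α : Type*} [MeasurableSpace α] {μ : Measure α}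

lemma integrable_average {F G : Type*} [NormedAddCommGroup F] [NormedSpace ℝ F]
    [NormedAddCommGroup G] [NormedSpace ℝ G] {L : α → F →L[ℝ] G} {τ : α → ℂ}
    (hL : Integrable L μ) (hτ : AEStronglyMeasurable τ μ) {f : ℂ → F} {C : ℝ}
    (hf : Continuous f) (hC : ∀ z, ‖f z‖ ≤ C) (z : ℂ) :
    Integrable (fun a => L a (f (z + τ a))) μ := by
  refine (hL.norm.mul_const C).mono' ?_ ?_
  · exact isBoundedBilinearMap_apply.continuous.comp_aestronglyMeasurable
      (hL.1.prodMk (hf.comp_aestronglyMeasurable (hτ.const_add z)))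
  · exact Filter.Eventually.of_forall fun a =>
      ((L a).le_opNorm _).trans (by gcongr; exact hC _)

lemma hasFDerivAt_average {F G : Type*} [NormedAddCommGroup F] [NormedSpace ℝ F]
    [NormedAddCommGroup G] [NormedSpace ℝ G] {L : α → F →L[ℝ] G} {τ : α → ℂ}
    (hL : Integrable L μ) (hτ : AEStronglyMeasurable τ μ) {f : ℂ → F} {M : ℕ → ℝ}
    (hf : BoundedSmooth f M) (z : ℂ) :
    HasFDerivAt (fun z => ∫ a, L a (f (z + τ a)) ∂μ)
      (∫ a, ContinuousLinearMap.compL ℝ ℂ F G (L a) (fderiv ℝ f (z + τ a)) ∂μ) z := by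
  have hL' : Integrable (fun a => ContinuousLinearMap.compL ℝ ℂ F G (L a)) μ :=
    (ContinuousLinearMap.compL ℝ ℂ F G).integrable_comp hL
  refine hasFDerivAt_integral_of_dominated_of_fderiv_le (bound := fun a => ‖L a‖ * M 1)
    (F' := fun z a => ContinuousLinearMap.compL ℝ ℂ F G (L a) (fderiv ℝ f (z + τ a)))
    Filter.univ_mem ?_ ?_ ?_ ?_ ?_ ?_
  · exact Filter.Eventually.of_forall fun w =>
      (integrable_average hL hτ hf.1.continuous hf.norm_le w).1
  · exact integrable_average hL hτ hf.1.continuous hf.norm_le z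
  · exact (integrable_average hL' hτ hf.fderiv.1.continuous hf.fderiv.norm_le z).1
  · refine Filter.Eventually.of_forall fun a w _ => ?_
    rw [ContinuousLinearMap.compL_apply]
    refine (ContinuousLinearMap.opNorm_comp_le _ _).trans ?_
    gcongr
    exact hf.norm_fderiv_le _
  · exact hL.norm.mul_const _
  · refine Filter.Eventually.of_forall fun a w _ => ?_
    rw [ContinuousLinearMap.compL_apply]
    exact (L a).hasFDerivAt.comp w ((hasFDerivAt_comp_add_right (τ a)).2 (hf.hasFDerivAt (w + τ a)))

lemma contDiff_average_and_norm_iteratedFDeriv_le (n : ℕ) {τ : α → ℂ}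
    (hτ : AEStronglyMeasurable τ μ) {C : ℝ} :
    ∀ {F G : Type} [NormedAddCommGroup F] [NormedSpace ℝ F]
    [NormedAddCommGroup G] [NormedSpace ℝ G] {L : α → F →L[ℝ] G}
    (_ : Integrable L μ) (_ : ∫ a, ‖L a‖ ∂μ ≤ C) {f : ℂ → F} {M : ℕ → ℝ}
    (_ : BoundedSmooth f M),
    ContDiff ℝ n (fun z => ∫ a, L a (f (z + τ a)) ∂μ) ∧
      ∀ z, ‖iteratedFDeriv ℝ n (fun z => ∫ a, L a (f (z + τ a)) ∂μ) z‖ ≤ C * M n := by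
  induction n with
  | zero =>
    intro F G _ _ _ _ L hL hC f M hf
    refine ⟨contDiff_zero.2 (continuous_iff_continuousAt.2 fun z =>
      (hasFDerivAt_average hL hτ hf z).continuousAt), fun z => ?_⟩
    rw [norm_iteratedFDeriv_zero]
    refine (norm_integral_le_of_norm_le (hL.norm.mul_const (M 0))
      (Filter.Eventually.of_forall fun a => ((L a).le_opNorm _).trans ?_)).trans ?_
    · gcongr; exact hf.norm_le _
    · rw [integral_mul_const]
      exact mul_le_mul_of_nonneg_right hC (hf.nonneg 0)
  | succ n ih =>
    intro F G _ _ _ _ L hL hC f M hf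
    have hL' : Integrable (fun a => ContinuousLinearMap.compL ℝ ℂ F G (L a)) μ :=
      (ContinuousLinearMap.compL ℝ ℂ F G).integrable_comp hL
    have hC' : ∫ a, ‖ContinuousLinearMap.compL ℝ ℂ F G (L a)‖ ∂μ ≤ C := by
      refine (integral_mono hL'.norm hL.norm fun a => ?_).trans hC
      refine ((ContinuousLinearMap.compL ℝ ℂ F G).le_opNorm _).trans ?_
      exact mul_le_of_le_one_left (norm_nonneg _) (ContinuousLinearMap.norm_compL_le ℝ ℂ F G)
    obtain ⟨h1, h2⟩ := ih hL' hC' hf.fderiv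
    have he : fderiv ℝ (fun z => ∫ a, L a (f (z + τ a)) ∂μ) =
        fun z => ∫ a, ContinuousLinearMap.compL ℝ ℂ F G (L a) (fderiv ℝ f (z + τ a)) ∂μ :=
      funext fun z => (hasFDerivAt_average hL hτ hf z).fderiv
    refine ⟨?_, fun z => ?_⟩
    · push_cast
      rw [contDiff_succ_iff_fderiv, he]
      exact ⟨fun z => (hasFDerivAt_average hL hτ hf z).differentiableAt, by simp, h1⟩
    · rw [← norm_iteratedFDeriv_fderiv, he]
      exact h2 z

/-- Averaging translates of a boundedly smooth function against an integrable kernel. -/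
lemma BoundedSmooth.average {F G : Type} [NormedAddCommGroup F] [NormedSpace ℝ F]
    [NormedAddCommGroup G] [NormedSpace ℝ G] {L : α → F →L[ℝ] G} {τ : α → ℂ}
    (hL : Integrable L μ) (hτ : AEStronglyMeasurable τ μ) {f : ℂ → F} {M : ℕ → ℝ}
    (hf : BoundedSmooth f M) :
    BoundedSmooth (fun z => ∫ a, L a (f (z + τ a)) ∂μ) (fun k => (∫ a, ‖L a‖ ∂μ) * M k) :=
  ⟨contDiff_infty.2 fun n => (contDiff_average_and_norm_iteratedFDeriv_le n hτ hL le_rfl hf).1,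
    fun k => (contDiff_average_and_norm_iteratedFDeriv_le k hτ hL le_rfl hf).2⟩

end Average

section LocallyDominated

variable {α : Type*} [MeasurableSpace α] {μ : Measure α}
  {G : Type*} [NormedAddCommGroup G]

/-- A family `F z`, `z ∈ ℂ`, of measurable functions which for `z` in a bounded set
is dominated by a fixed integrable function. -/
def LocallyDominated (μ : Measure α) (F : ℂ → α → G) : Prop :=
  (∀ z, AEStronglyMeasurable (F z) μ) ∧
    ∀ ρ : ℝ, ∃ b : α → ℝ, Integrable b μ ∧ ∀ z, ‖z‖ ≤ ρ → ∀ a, ‖F z a‖ ≤ b a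

lemma LocallyDominated.integrable {F : ℂ → α → G} (hF : LocallyDominated μ F) (z : ℂ) :
    Integrable (F z) μ := by
  obtain ⟨b, hb, h⟩ := hF.2 ‖z‖
  exact hb.mono' (hF.1 z) (Filter.Eventually.of_forall fun a => h z le_rfl a)

variable [NormedSpace ℝ G]

lemma LocallyDominated.of_hasFDerivAt {F : ℂ → α → G} {F' : ℂ → α → ℂ →L[ℝ] G}
    (hF' : LocallyDominated μ F') (hm : ∀ z, AEStronglyMeasurable (F z) μ)
    (h0 : ∀ a, F 0 a = 0) (hd : ∀ z a, HasFDerivAt (fun z => F z a) (F' z a) z) :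
    LocallyDominated μ F := by
  refine ⟨hm, fun ρ => ?_⟩
  obtain ⟨b, hb, h⟩ := hF'.2 ρ
  refine ⟨fun a => b a * ρ, hb.mul_const ρ, fun z hz a => ?_⟩
  have h0ρ : 0 ≤ ρ := (norm_nonneg z).trans hz
  have := Convex.norm_image_sub_le_of_norm_hasFDerivWithin_le (𝕜 := ℝ) (f := fun z => F z a)
    (f' := fun z => F' z a) (s := Metric.closedBall 0 ρ) (C := b a) (x := 0) (y := z)
    (fun w _ => (hd w a).hasFDerivWithinAt) (fun w hw => h w (by simpa using hw) a)
    (convex_closedBall _ _) (by simpa using h0ρ) (by simpa using hz)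
  simp only [h0, sub_zero] at this
  exact this.trans (mul_le_mul_of_nonneg_left hz
    ((norm_nonneg _).trans (h 0 (by simpa using h0ρ) a)))

lemma LocallyDominated.hasFDerivAt_integral {F : ℂ → α → G} {F' : ℂ → α → ℂ →L[ℝ] G}
    (hF : LocallyDominated μ F) (hF' : LocallyDominated μ F')
    (hd : ∀ z a, HasFDerivAt (fun z => F z a) (F' z a) z) (z : ℂ) :
    HasFDerivAt (fun z => ∫ a, F z a ∂μ) (∫ a, F' z a ∂μ) z := by
  obtain ⟨b, hb, h⟩ := hF'.2 (‖z‖ + 1)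
  refine hasFDerivAt_integral_of_dominated_of_fderiv_le (bound := b) (F' := F')
    (Metric.ball_mem_nhds z one_pos) (Filter.Eventually.of_forall hF.1) (hF.integrable z)
    (hF'.1 z) (Filter.Eventually.of_forall fun a w hw => h w ?_ a) hb
    (Filter.Eventually.of_forall fun a w _ => hd w a)
  have h1 : ‖w - z‖ < 1 := by simpa [dist_eq_norm] using hw
  have h2 := norm_le_norm_add_norm_sub' w z
  linarith

end LocallyDominated

/-- The Euclidean inner product of `ℂ` as a real bilinear map. -/
noncomputable def innerB : ℂ →L[ℝ] ℂ →L[ℝ] ℝ :=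
  reCLM.smulRight reCLM + imCLM.smulRight imCLM

lemma innerB_apply (z v : ℂ) : innerB z v = z.re * v.re + z.im * v.im := by
  simp [innerB]

lemma norm_sq_eq_re_im (z : ℂ) : ‖z‖ ^ 2 = z.re ^ 2 + z.im ^ 2 := by
  rw [← normSq_eq_norm_sq, normSq_apply]; ring

lemma abs_innerB_le (z v : ℂ) : |innerB z v| ≤ ‖z‖ * ‖v‖ := by
  have h : innerB z v = inner ℝ z v := by
    rw [innerB_apply, Complex.inner]; simp; ring
  rw [h]; exact abs_real_inner_le_norm z v

lemma norm_innerB_apply_le (z : ℂ) : ‖innerB z‖ ≤ ‖z‖ :=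
  ContinuousLinearMap.opNorm_le_bound _ (norm_nonneg z) fun v => abs_innerB_le z v

lemma norm_innerB_le : ‖innerB‖ ≤ 1 :=
  ContinuousLinearMap.opNorm_le_bound _ zero_le_one fun z => by
    simpa using norm_innerB_apply_le z

lemma hasFDerivAt_radial {φ : ℝ → ℝ} {φ' : ℝ} {z : ℂ} (h : HasDerivAt φ φ' (‖z‖ ^ 2)) :
    HasFDerivAt (fun z : ℂ => φ (‖z‖ ^ 2)) ((2 * φ') • innerB z) z := by
  refine (h.comp_hasFDerivAt z (hasStrictFDerivAt_norm_sq z).hasFDerivAt).congr_fderiv ?_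
  ext v
  simp [innerB_apply, Complex.inner]
  ring

/-- A smooth radial function which is asymptotic to `2 log |z|` and whose Laplacian is
`8 (1 + |z|²)⁻³`. -/
noncomputable def logKernel (z : ℂ) : ℝ := Real.log (1 + ‖z‖ ^ 2) - (1 + ‖z‖ ^ 2)⁻¹

/-- First derivative of `logKernel`. -/
noncomputable def logKernelD (z : ℂ) : ℂ →L[ℝ] ℝ :=
  (2 * ((1 + ‖z‖ ^ 2)⁻¹ + ((1 + ‖z‖ ^ 2) ^ 2)⁻¹)) • innerB z

/-- Second derivative of `logKernel`. -/
noncomputable def logKernelDD (z : ℂ) : ℂ →L[ℝ] ℂ →L[ℝ] ℝ :=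
  (2 * ((1 + ‖z‖ ^ 2)⁻¹ + ((1 + ‖z‖ ^ 2) ^ 2)⁻¹)) • innerB +
    (4 * (-((1 + ‖z‖ ^ 2) ^ 2)⁻¹ - 2 * ((1 + ‖z‖ ^ 2) ^ 3)⁻¹)) • (innerB z).smulRight (innerB z)

lemma hasDerivAt_inv_one_add_pow (n : ℕ) {s : ℝ} (hs : 0 ≤ s) :
    HasDerivAt (fun s : ℝ => ((1 + s) ^ (n + 1))⁻¹) (-(n + 1) * ((1 + s) ^ (n + 2))⁻¹) s := by
  have h1 : HasDerivAt (fun s : ℝ => 1 + s) 1 s := by simpa using (hasDerivAt_id s).const_add 1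
  have hp : (1 + s) ≠ 0 := by positivity
  refine ((h1.fun_pow (n + 1)).fun_inv (pow_ne_zero _ hp)).congr_deriv ?_
  simp only [Nat.add_sub_cancel]
  push_cast
  field_simp
  ring

lemma hasDerivAt_inv_one_add {s : ℝ} (hs : 0 ≤ s) :
    HasDerivAt (fun s : ℝ => (1 + s)⁻¹) (-((1 + s) ^ 2)⁻¹) s := by
  simpa using hasDerivAt_inv_one_add_pow 0 hs

lemma hasDerivAt_logKernelD_coeff {s : ℝ} (hs : 0 ≤ s) :
    HasDerivAt (fun s : ℝ => 2 * ((1 + s)⁻¹ + ((1 + s) ^ 2)⁻¹))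
      (2 * (-((1 + s) ^ 2)⁻¹ - 2 * ((1 + s) ^ 3)⁻¹)) s :=
  (((hasDerivAt_inv_one_add hs).add (hasDerivAt_inv_one_add_pow 1 hs)).const_mul 2).congr_deriv
    (by norm_num; ring)

lemma hasDerivAt_logKernelDD_coeff {s : ℝ} (hs : 0 ≤ s) :
    HasDerivAt (fun s : ℝ => 4 * (-((1 + s) ^ 2)⁻¹ - 2 * ((1 + s) ^ 3)⁻¹))
      (4 * (2 * ((1 + s) ^ 3)⁻¹ + 6 * ((1 + s) ^ 4)⁻¹)) s :=
  (((hasDerivAt_inv_one_add_pow 1 hs).neg.sub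
    ((hasDerivAt_inv_one_add_pow 2 hs).const_mul 2)).const_mul 4).congr_deriv
    (by norm_num; ring)

lemma hasFDerivAt_logKernel (z : ℂ) : HasFDerivAt logKernel (logKernelD z) z := by
  have hs : (0 : ℝ) ≤ ‖z‖ ^ 2 := by positivity
  have h1 : HasDerivAt (fun s : ℝ => 1 + s) 1 (‖z‖ ^ 2) := by
    simpa using (hasDerivAt_id (‖z‖ ^ 2)).const_add 1
  refine (hasFDerivAt_radial ((h1.log (by positivity)).sub
    (hasDerivAt_inv_one_add hs))).congr_fderiv ?_
  rw [logKernelD]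
  congr 2
  ring

lemma hasFDerivAt_logKernelD (z : ℂ) : HasFDerivAt logKernelD (logKernelDD z) z := by
  have hs : (0 : ℝ) ≤ ‖z‖ ^ 2 := by positivity
  refine ((hasFDerivAt_radial (hasDerivAt_logKernelD_coeff hs)).smul
    (innerB.hasFDerivAt (x := z))).congr_fderiv ?_
  rw [logKernelDD]
  congr 1
  ext v w
  simp
  ring

lemma contDiff_logKernel : ContDiff ℝ (⊤ : ℕ∞) logKernel := by
  have h : ContDiff ℝ (⊤ : ℕ∞) (fun z : ℂ => 1 + ‖z‖ ^ 2) :=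
    contDiff_const.add (contDiff_norm_sq ℝ)
  have h0 : ∀ z : ℂ, 1 + ‖z‖ ^ 2 ≠ 0 := fun z => by positivity
  exact (h.log h0).sub (h.inv h0)

lemma contDiff_logKernelD : ContDiff ℝ (⊤ : ℕ∞) logKernelD := by
  have he : fderiv ℝ logKernel = logKernelD := funext fun z => (hasFDerivAt_logKernel z).fderiv
  rw [← he]
  exact contDiff_logKernel.fderiv_right (by exact_mod_cast le_top)

lemma contDiff_logKernelDD : ContDiff ℝ (⊤ : ℕ∞) logKernelDD := by
  have he : fderiv ℝ logKernelD = logKernelDD := funext fun z => (hasFDerivAt_logKernelD z).fderiv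
  rw [← he]
  exact contDiff_logKernelD.fderiv_right (by exact_mod_cast le_top)

/-- The weight `(1 + |z|²)^(-3/2)`. -/
noncomputable def weight (z : ℂ) : ℝ := (√(1 + ‖z‖ ^ 2) ^ 3)⁻¹

lemma integrable_weight : Integrable weight := by
  have h := integrable_rpow_neg_one_add_norm_sq (E := ℂ) (μ := volume) (r := 3)
    (by rw [Complex.finrank_real_complex]; norm_num)
  convert h using 2 with z
  have : (0 : ℝ) ≤ 1 + ‖z‖ ^ 2 := by positivity
  rw [weight, Real.sqrt_eq_rpow, ← Real.rpow_natCast, ← Real.rpow_mul this, ← Real.rpow_neg this]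
  norm_num

lemma weight_translate_le {ρ : ℝ} {z : ℂ} (hz : ‖z‖ ≤ ρ) (η : ℂ) :
    weight (z - η) ≤ √(2 + 2 * ρ ^ 2) ^ 3 * weight η := by
  have h1 : ‖η‖ ≤ ‖z‖ + ‖z - η‖ := by
    have := norm_sub_norm_le η z
    rw [norm_sub_rev] at this; linarith
  have h0 : 0 ≤ ‖z‖ := norm_nonneg z
  have h2 : 1 + ‖η‖ ^ 2 ≤ (2 + 2 * ρ ^ 2) * (1 + ‖z - η‖ ^ 2) := by
    have h3 : ‖η‖ ^ 2 ≤ 2 * ‖z‖ ^ 2 + 2 * ‖z - η‖ ^ 2 := by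
      nlinarith [norm_nonneg η, norm_nonneg (z - η), sq_nonneg (‖z‖ - ‖z - η‖)]
    have h4 : ‖z‖ ^ 2 ≤ ρ ^ 2 := by gcongr
    nlinarith [mul_nonneg (sq_nonneg ρ) (sq_nonneg ‖z - η‖)]
  have h5 : √(1 + ‖η‖ ^ 2) ≤ √(2 + 2 * ρ ^ 2) * √(1 + ‖z - η‖ ^ 2) := by
    rw [← Real.sqrt_mul (by positivity)]; exact Real.sqrt_le_sqrt h2
  have p1 : 0 < √(1 + ‖η‖ ^ 2) := by positivity
  have p2 : 0 < √(1 + ‖z - η‖ ^ 2) := by positivity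
  rw [weight, weight, ← div_eq_mul_inv, inv_eq_one_div, div_le_div_iff₀ (by positivity)
    (by positivity), one_mul, ← mul_pow]
  gcongr

lemma norm_fderiv_logKernelDD_le (z : ℂ) : ‖fderiv ℝ logKernelDD z‖ ≤ 100 * weight z := by
  have hs : (0 : ℝ) ≤ ‖z‖ ^ 2 := by positivity
  have h1 := hasFDerivAt_radial (hasDerivAt_logKernelD_coeff hs)
  have h2 := hasFDerivAt_radial (hasDerivAt_logKernelDD_coeff hs)
  obtain ⟨Q', hQ'⟩ : ∃ Q' : ℂ →L[ℝ] ℂ →L[ℝ] ℂ →L[ℝ] ℝ, Q' =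
      (ContinuousLinearMap.smulRightL ℝ ℂ (ℂ →L[ℝ] ℝ)).precompR ℂ (innerB z) innerB +
        (ContinuousLinearMap.smulRightL ℝ ℂ (ℂ →L[ℝ] ℝ)).precompL ℂ innerB (innerB z) := ⟨_, rfl⟩
  have hQ : HasFDerivAt (fun z => (innerB z).smulRight (innerB z)) Q' z := by
    rw [hQ']
    exact (ContinuousLinearMap.smulRightL ℝ ℂ (ℂ →L[ℝ] ℝ)).hasFDerivAt_of_bilinear
      (innerB.hasFDerivAt (x := z)) (innerB.hasFDerivAt (x := z))
  have hB := norm_innerB_apply_le z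
  have hQn : ‖Q'‖ ≤ 2 * ‖z‖ := by
    refine ContinuousLinearMap.opNorm_le_bound _ (by positivity) fun v => ?_
    have hv := norm_innerB_apply_le v
    have he : Q' v = (innerB z).smulRight (innerB v) + (innerB v).smulRight (innerB z) := by
      rw [hQ']; rfl
    rw [he]
    refine (norm_add_le _ _).trans ?_
    rw [ContinuousLinearMap.norm_smulRight_apply, ContinuousLinearMap.norm_smulRight_apply]
    have := mul_le_mul hB hv (norm_nonneg _) (norm_nonneg _)
    linarith
  have hQ0 : ‖(innerB z).smulRight (innerB z)‖ ≤ ‖z‖ ^ 2 := by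
    rw [ContinuousLinearMap.norm_smulRight_apply, sq]
    exact mul_le_mul hB hB (norm_nonneg _) (norm_nonneg _)
  have h4 : fderiv ℝ logKernelDD z = _ := ((h1.smul_const innerB).add (h2.smul hQ)).fderiv
  rw [h4, weight]
  set t := √(1 + ‖z‖ ^ 2) with ht
  have ht1 : 1 ≤ t := by rw [ht]; exact Real.one_le_sqrt.2 (by linarith)
  have htz : ‖z‖ ≤ t := Real.le_sqrt_of_sq_le (by linarith)
  have ht2 : 1 + ‖z‖ ^ 2 = t ^ 2 := (Real.sq_sqrt (by positivity)).symm
  have ht0 : 0 < t := by linarith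
  rw [ht2]
  have i6 : (t ^ 6)⁻¹ ≤ (t ^ 4)⁻¹ := by gcongr; norm_num
  have i8 : (t ^ 8)⁻¹ ≤ (t ^ 6)⁻¹ := by gcongr; norm_num
  have i4 : 0 < (t ^ 4)⁻¹ := by positivity
  have i60 : 0 < (t ^ 6)⁻¹ := by positivity
  have i80 : 0 < (t ^ 8)⁻¹ := by positivity
  have e1 : ((t ^ 2) ^ 2)⁻¹ = (t ^ 4)⁻¹ := by rw [← pow_mul]
  have e2 : ((t ^ 2) ^ 3)⁻¹ = (t ^ 6)⁻¹ := by rw [← pow_mul]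
  have e3 : ((t ^ 2) ^ 4)⁻¹ = (t ^ 8)⁻¹ := by rw [← pow_mul]
  rw [e1, e2, e3]
  have j4 : (t ^ 4)⁻¹ * t = (t ^ 3)⁻¹ := by field_simp
  have j6 : (t ^ 6)⁻¹ * t ^ 3 = (t ^ 3)⁻¹ := by field_simp
  have a1 : |2 * (2 * (-(t ^ 4)⁻¹ - 2 * (t ^ 6)⁻¹))| ≤ 12 * (t ^ 4)⁻¹ := by
    rw [abs_le]; constructor <;> linarith
  have a2 : |4 * (-(t ^ 4)⁻¹ - 2 * (t ^ 6)⁻¹)| ≤ 12 * (t ^ 4)⁻¹ := by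
    rw [abs_le]; constructor <;> linarith
  have a3 : |2 * (4 * (2 * (t ^ 6)⁻¹ + 6 * (t ^ 8)⁻¹))| ≤ 64 * (t ^ 6)⁻¹ := by
    rw [abs_le]; constructor <;> linarith
  refine (norm_add_le _ _).trans ((add_le_add_right (norm_add_le _ _) _).trans ?_)
  rw [ContinuousLinearMap.norm_smulRight_apply, ContinuousLinearMap.norm_smulRight_apply,
    norm_smul, norm_smul, norm_smul, Real.norm_eq_abs, Real.norm_eq_abs, Real.norm_eq_abs]
  have b1 := mul_le_mul (mul_le_mul a1 (hB.trans htz) (norm_nonneg _) (by positivity))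
    norm_innerB_le (norm_nonneg _) (by positivity)
  have b2 := mul_le_mul a2 (hQn.trans (mul_le_mul_of_nonneg_left htz zero_le_two))
    (norm_nonneg _) (by positivity)
  have b3 := mul_le_mul (mul_le_mul a3 (hB.trans htz) (norm_nonneg _) (by positivity))
    (hQ0.trans (pow_le_pow_left₀ (norm_nonneg z) htz 2)) (norm_nonneg _) (by positivity)
  have k1 : 12 * (t ^ 4)⁻¹ * t * 1 = 12 * (t ^ 3)⁻¹ := by rw [← j4]; ring
  have k2 : 12 * (t ^ 4)⁻¹ * (2 * t) = 24 * (t ^ 3)⁻¹ := by rw [← j4]; ring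
  have k3 : 64 * (t ^ 6)⁻¹ * t * t ^ 2 = 64 * (t ^ 3)⁻¹ := by rw [← j6]; ring
  linarith

lemma logKernelDD_apply (z v w : ℂ) : logKernelDD z v w =
    2 * ((1 + ‖z‖ ^ 2)⁻¹ + ((1 + ‖z‖ ^ 2) ^ 2)⁻¹) * innerB v w +
    4 * (-((1 + ‖z‖ ^ 2) ^ 2)⁻¹ - 2 * ((1 + ‖z‖ ^ 2) ^ 3)⁻¹) * (innerB z v * innerB z w) := by
  simp [logKernelDD]

lemma logKernelDD_symm (z v w : ℂ) : logKernelDD z v w = logKernelDD z w v := by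
  simp only [logKernelDD_apply, innerB_apply]
  ring

lemma logKernelDD_trace (z : ℂ) :
    logKernelDD z 1 1 + logKernelDD z I I = 8 * ((1 + ‖z‖ ^ 2) ^ 3)⁻¹ := by
  have h := norm_sq_eq_re_im z
  have h0 : 1 + ‖z‖ ^ 2 ≠ 0 := by positivity
  have e : (z.re * z.re + z.im * z.im) = ‖z‖ ^ 2 := by rw [h]; ring
  simp only [logKernelDD_apply, innerB_apply]
  simp only [one_re, one_im, I_re, I_im, mul_one, mul_zero, add_zero, zero_add]
  have : ∀ a b x y : ℝ, a + b * x + (a + b * y) = 2 * a + b * (x + y) := by intros; ring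
  rw [this, e]
  field_simp
  ring

/-- The Hessian of the potential of `g` with respect to `logKernel`, normalised at `0`. -/
noncomputable def logPotentialHessian (g : ℂ → ℝ) (z : ℂ) : ℂ →L[ℝ] ℂ →L[ℝ] ℝ :=
  ∫ η, g η • (logKernelDD (z - η) - logKernelDD (-η))

lemma locallyDominated_logKernelDDD {g : ℂ → ℝ} {M : ℝ} (hg : Continuous g)
    (hM : ∀ z, ‖g z‖ ≤ M) :
    LocallyDominated volume (fun z η => g η • fderiv ℝ logKernelDD (z - η)) := by
  have hM0 : 0 ≤ M := (norm_nonneg _).trans (hM 0)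
  refine ⟨fun z => ?_, fun ρ => ⟨fun η => M * (100 * (√(2 + 2 * ρ ^ 2) ^ 3 * weight η)),
    ((integrable_weight.const_mul _).const_mul _).const_mul _, fun z hz η => ?_⟩⟩
  · exact (hg.smul ((contDiff_logKernelDD.continuous_fderiv (by simp)).comp
      (continuous_const.sub continuous_id))).aestronglyMeasurable
  · rw [norm_smul]
    have h1 := norm_fderiv_logKernelDD_le (z - η)
    have h2 := weight_translate_le hz η
    exact mul_le_mul (hM η) (h1.trans (mul_le_mul_of_nonneg_left h2 (by norm_num)))
      (norm_nonneg _) hM0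

lemma locallyDominated_logKernelDD {g : ℂ → ℝ} {M : ℝ} (hg : Continuous g)
    (hM : ∀ z, ‖g z‖ ≤ M) :
    LocallyDominated volume (fun z η => g η • (logKernelDD (z - η) - logKernelDD (-η))) := by
  refine (locallyDominated_logKernelDDD hg hM).of_hasFDerivAt (fun z => ?_) (fun η => by simp)
    fun z η => ?_
  · have := contDiff_logKernelDD.continuous
    exact (by fun_prop : Continuous fun η => g η • (logKernelDD (z - η) - logKernelDD (-η))
      ).aestronglyMeasurable
  · have h := ((contDiff_logKernelDD.differentiable (by simp)) (z - η)).hasFDerivAt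
    exact (((hasFDerivAt_comp_sub η).2 h).sub_const _).const_smul (g η)

lemma integrable_fderiv_logKernelDD : Integrable (fderiv ℝ logKernelDD) :=
  (integrable_weight.const_mul 100).mono'
    (contDiff_logKernelDD.continuous_fderiv (by simp)).aestronglyMeasurable
    (Filter.Eventually.of_forall norm_fderiv_logKernelDD_le)

lemma exists_boundedSmooth_fderiv_logPotentialHessian :
    ∃ C : ℝ, ∀ (g : ℂ → ℝ) (M : ℕ → ℝ), BoundedSmooth g M →
      ∃ T : ℂ → ℂ →L[ℝ] ℂ →L[ℝ] ℂ →L[ℝ] ℝ, (∀ z, HasFDerivAt (logPotentialHessian g) (T z) z) ∧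
        BoundedSmooth T (fun k => C * M k) := by
  set L : ℂ → ℝ →L[ℝ] ℂ →L[ℝ] ℂ →L[ℝ] ℂ →L[ℝ] ℝ := fun w =>
    ContinuousLinearMap.toSpanSingleton ℝ (fderiv ℝ logKernelDD w) with hLdef
  have hL : Integrable L :=
    (ContinuousLinearMap.toSpanSingletonCLE (𝕜 := ℝ)).toContinuousLinearMap.integrable_comp
      integrable_fderiv_logKernelDD
  refine ⟨∫ w, ‖L w‖, fun g M hg => ⟨_, fun z =>
    (locallyDominated_logKernelDD hg.1.continuous hg.norm_le).hasFDerivAt_integral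
      (locallyDominated_logKernelDDD hg.1.continuous hg.norm_le) (fun z η => ?_) z, ?_⟩⟩
  · have h := ((contDiff_logKernelDD.differentiable (by simp)) (z - η)).hasFDerivAt
    exact (((hasFDerivAt_comp_sub η).2 h).sub_const _).const_smul (g η)
  · have := BoundedSmooth.average hL (τ := fun w => -w)
      continuous_neg.aestronglyMeasurable hg
    convert this using 1
    ext1 z
    rw [← integral_sub_left_eq_self _ _ z]
    simp [hLdef, sub_eq_add_neg]

lemma exists_hasHessian_logPotential {g : ℂ → ℝ} {M : ℝ} (hg : Continuous g)
    (hM : ∀ z, ‖g z‖ ≤ M) :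
    ∃ (P : ℂ → ℝ) (P' : ℂ → ℂ →L[ℝ] ℝ), (∀ z, HasFDerivAt P (P' z) z) ∧
      ∀ z, HasFDerivAt P' (logPotentialHessian g z) z := by
  have c0 := contDiff_logKernel.continuous
  have c1 := contDiff_logKernelD.continuous
  have c2 := contDiff_logKernelDD.continuous
  have d2 := locallyDominated_logKernelDD hg hM
  have hd1 : ∀ z η : ℂ, HasFDerivAt
      (fun z => g η • (logKernelD (z - η) - logKernelD (-η) - logKernelDD (-η) z))
      (g η • (logKernelDD (z - η) - logKernelDD (-η))) z := fun z η =>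
    ((((hasFDerivAt_comp_sub η).2 (hasFDerivAt_logKernelD (z - η))).sub_const _).sub
      (logKernelDD (-η)).hasFDerivAt).const_smul (g η)
  have d1 : LocallyDominated volume
      (fun z η => g η • (logKernelD (z - η) - logKernelD (-η) - logKernelDD (-η) z)) :=
    d2.of_hasFDerivAt (fun z => (by fun_prop : Continuous fun η => g η •
      (logKernelD (z - η) - logKernelD (-η) - logKernelDD (-η) z)).aestronglyMeasurable)
      (fun η => by simp) hd1
  have hd0 : ∀ z η : ℂ, HasFDerivAt
      (fun z => g η • (logKernel (z - η) - logKernel (-η) - logKernelD (-η) z -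
        (1 / 2 : ℝ) • logKernelDD (-η) z z))
      (g η • (logKernelD (z - η) - logKernelD (-η) - logKernelDD (-η) z)) z := fun z η => by
    have h1 := ((hasFDerivAt_comp_sub η).2 (hasFDerivAt_logKernel (z - η))).sub_const
      (logKernel (-η))
    have h2 := (logKernelDD (-η)).hasFDerivAt_of_bilinear (hasFDerivAt_id z) (hasFDerivAt_id z)
    refine (((h1.sub (logKernelD (-η)).hasFDerivAt).sub
      (h2.const_smul (1 / 2 : ℝ))).const_smul (g η)).congr_fderiv ?_
    congr 2
    ext v
    simp [logKernelDD_symm (-η) v z]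
    ring
  have d0 : LocallyDominated volume
      (fun z η => g η • (logKernel (z - η) - logKernel (-η) - logKernelD (-η) z -
        (1 / 2 : ℝ) • logKernelDD (-η) z z)) :=
    d1.of_hasFDerivAt (fun z => (by fun_prop : Continuous fun η => g η •
      (logKernel (z - η) - logKernel (-η) - logKernelD (-η) z -
        (1 / 2 : ℝ) • logKernelDD (-η) z z)).aestronglyMeasurable)
      (fun η => by simp) hd0
  exact ⟨_, _, d0.hasFDerivAt_integral d1 hd0, d1.hasFDerivAt_integral d2 hd1⟩

lemma logPotentialHessian_apply {g : ℂ → ℝ} {M : ℝ} (hg : Continuous g)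
    (hM : ∀ z, ‖g z‖ ≤ M) (z v w : ℂ) :
    Integrable (fun η => g η * (logKernelDD (z - η) v w - logKernelDD (-η) v w)) ∧
    logPotentialHessian g z v w =
      ∫ η, g η * (logKernelDD (z - η) v w - logKernelDD (-η) v w) := by
  have h := (locallyDominated_logKernelDD hg hM).integrable z
  have h1 := h.apply_continuousLinearMap v
  have h2 := h1.apply_continuousLinearMap w
  refine ⟨by simpa using h2, ?_⟩
  rw [logPotentialHessian, ContinuousLinearMap.integral_apply h,
    ContinuousLinearMap.integral_apply h1]
  simp

/-- The kernel `1 / z ^ 2`, cut off inside the unit disc. -/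
noncomputable def cutKernel (z : ℂ) : ℂ := if 1 ≤ ‖z‖ then (z ^ 2)⁻¹ else 0

lemma cutKernel_neg (z : ℂ) : cutKernel (-z) = cutKernel z := by simp [cutKernel]

lemma measurable_cutKernel : Measurable cutKernel := by
  unfold cutKernel
  refine Measurable.ite (measurableSet_le measurable_const measurable_norm) ?_ measurable_const
  fun_prop

lemma norm_cutKernel_le_one (z : ℂ) : ‖cutKernel z‖ ≤ 1 := by
  unfold cutKernel
  split_ifs with h
  · rw [norm_inv, norm_pow]
    exact inv_le_one_of_one_le₀ (one_le_pow₀ h)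
  · simp

lemma norm_cutKernel_le {ρ : ℝ} (hρ : 0 < ρ) {z : ℂ} (hz : ρ ≤ ‖z‖) :
    ‖cutKernel z‖ ≤ (ρ ^ 2)⁻¹ := by
  unfold cutKernel
  split_ifs with h
  · rw [norm_inv, norm_pow]
    gcongr
  · simp; positivity

/-- An integrable majorant of order `‖z‖ ^ (-4)`. -/
noncomputable def density (z : ℂ) : ℝ := ((1 + ‖z‖ ^ 2) ^ 2)⁻¹

lemma density_nonneg (z : ℂ) : 0 ≤ density z := by unfold density; positivity

lemma continuous_density : Continuous density := by
  unfold density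
  exact Continuous.inv₀ (by fun_prop) fun z => by positivity

lemma integrable_density : Integrable density := by
  refine integrable_weight.mono' continuous_density.aestronglyMeasurable
    (Filter.Eventually.of_forall fun z => ?_)
  rw [Real.norm_of_nonneg (density_nonneg z)]
  unfold density weight
  have h : (1 : ℝ) ≤ √(1 + ‖z‖ ^ 2) := Real.one_le_sqrt.2 (by nlinarith [sq_nonneg ‖z‖])
  have h2 : (1 + ‖z‖ ^ 2) ^ 2 = √(1 + ‖z‖ ^ 2) ^ 4 := by
    conv_lhs => rw [← Real.sq_sqrt (by positivity : (0 : ℝ) ≤ 1 + ‖z‖ ^ 2)]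
    ring
  rw [h2]
  gcongr
  · norm_num

lemma abs_logKernelDD_add_cutKernel_le (z v w : ℂ) :
    |logKernelDD z v w + 2 * (cutKernel z * (v * w)).re| ≤ 40 * density z * (‖v‖ * ‖w‖) := by
  set X : ℝ := ((starRingEnd ℂ z) ^ 2 * (v * w)).re with hX
  set s : ℝ := ‖z‖ ^ 2 with hs
  have hs0 : 0 ≤ s := by positivity
  have hXle : |X| ≤ s * (‖v‖ * ‖w‖) := by
    refine (abs_re_le_norm _).trans ?_
    simp [hs]
  have hsx := norm_sq_eq_re_im z
  have hDD : logKernelDD z v w = 4 * ((1 + s) ^ 3)⁻¹ * innerB v w -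
      2 * (((1 + s) ^ 2)⁻¹ + 2 * ((1 + s) ^ 3)⁻¹) * X := by
    have e : innerB z v * innerB z w = X / 2 + s * innerB v w / 2 := by
      rw [hX, hs, hsx]
      simp only [innerB_apply, pow_two, mul_re, conj_re, conj_im, mul_im]
      ring
    have h0 : 1 + s ≠ 0 := by positivity
    rw [logKernelDD_apply, e, ← hs]
    field_simp
    ring
  have hvw := abs_innerB_le v w
  have hN : 0 ≤ ‖v‖ * ‖w‖ := by positivity
  have key : ∀ a b c : ℝ, 0 ≤ a → |b| * s ≤ c → ∀ K, a + c ≤ K →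
      |a * innerB v w + b * X| ≤ K * (‖v‖ * ‖w‖) := fun a b c ha hb K hK => by
    calc |a * innerB v w + b * X| ≤ |a * innerB v w| + |b * X| := abs_add_le _ _
      _ = a * |innerB v w| + |b| * |X| := by rw [abs_mul, abs_mul, abs_of_nonneg ha]
      _ ≤ a * (‖v‖ * ‖w‖) + |b| * (s * (‖v‖ * ‖w‖)) :=
        add_le_add (mul_le_mul_of_nonneg_left hvw ha)
          (mul_le_mul_of_nonneg_left hXle (abs_nonneg b))
      _ = (a + |b| * s) * (‖v‖ * ‖w‖) := by ring
      _ ≤ K * (‖v‖ * ‖w‖) := mul_le_mul_of_nonneg_right (by linarith) hN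
  set q : ℝ := (1 + s)⁻¹ with hq
  have hq0 : 0 < q := by positivity
  have hq1 : q ≤ 1 := inv_le_one_of_one_le₀ (by linarith)
  have hqs : q * (1 + s) = 1 := by rw [hq]; field_simp
  have e2 : ((1 + s) ^ 2)⁻¹ = q ^ 2 := by rw [hq, inv_pow]
  have e3 : ((1 + s) ^ 3)⁻¹ = q ^ 3 := by rw [hq, inv_pow]
  have hd : density z = q ^ 2 := by rw [density, ← hs, e2]
  have hq3 : q ^ 3 ≤ q ^ 2 := pow_le_pow_of_le_one hq0.le hq1 (by norm_num)
  rw [hDD, hd, e2, e3]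
  by_cases h : 1 ≤ ‖z‖
  · have hs1 : 1 ≤ s := one_le_pow₀ h
    have hz0 : z ≠ 0 := by rintro rfl; norm_num at h
    have e : (cutKernel z * (v * w)).re = (s ^ 2)⁻¹ * X := by
      have : cutKernel z = (((s ^ 2)⁻¹ : ℝ) : ℂ) * (starRingEnd ℂ z) ^ 2 := by
        have h3 : (s : ℂ) = starRingEnd ℂ z * z := by
          rw [mul_comm, mul_conj, normSq_eq_norm_sq]
        rw [cutKernel, if_pos h, ofReal_inv, ofReal_pow, h3]
        have hc : starRingEnd ℂ z ≠ 0 := by simpa using hz0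
        field_simp
      rw [this, mul_assoc, re_ofReal_mul]
    rw [e]
    have hs0' : 0 < s := by linarith
    have := key (4 * q ^ 3) (2 * ((s ^ 2)⁻¹ - q ^ 2) - 4 * q ^ 3) (10 * q ^ 2) (by positivity) ?_
      (40 * q ^ 2) (by nlinarith)
    · convert this using 2; ring
    · have h4 : ((s ^ 2)⁻¹ - q ^ 2) * s = q ^ 2 * (s⁻¹ + 2) := by
        rw [hq]; field_simp; ring
      have h5 : s⁻¹ ≤ 1 := inv_le_one_of_one_le₀ hs1
      have h6 : q * s ≤ 1 := by nlinarith
      have h7 : 0 < s⁻¹ := by positivity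
      have h8 : q ^ 3 * s ≤ q ^ 2 := by
        have : q ^ 3 * s = q ^ 2 * (q * s) := by ring
        rw [this]; exact mul_le_of_le_one_right (by positivity) h6
      have h9 : q ^ 2 * (s⁻¹ + 2) ≤ q ^ 2 * 3 :=
        mul_le_mul_of_nonneg_left (by linarith) (by positivity)
      rw [← abs_of_pos hs0', ← abs_mul, abs_of_pos hs0', abs_le]
      have h10 : 0 ≤ q ^ 2 * (s⁻¹ + 2) := by positivity
      have h11 : 0 ≤ q ^ 3 * s := by positivity
      have h12 : (2 * ((s ^ 2)⁻¹ - q ^ 2) - 4 * q ^ 3) * s =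
        2 * (q ^ 2 * (s⁻¹ + 2)) - 4 * (q ^ 3 * s) := by rw [← h4]; ring
      rw [h12]
      constructor <;> nlinarith
  · have hs1 : s ≤ 1 := pow_le_one₀ (norm_nonneg z) (not_le.1 h).le
    have e : (cutKernel z * (v * w)).re = 0 := by simp [cutKernel, h]
    rw [e]
    have := key (4 * q ^ 3) (-(2 * (q ^ 2 + 2 * q ^ 3))) (6 * q ^ 2) (by positivity) ?_
      (40 * q ^ 2) (by nlinarith)
    · convert this using 2; ring
    · rw [abs_neg, abs_of_nonneg (by positivity)]
      have : 2 * (q ^ 2 + 2 * q ^ 3) * s ≤ 2 * (q ^ 2 + 2 * q ^ 3) * 1 :=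
        mul_le_mul_of_nonneg_left hs1 (by positivity)
      nlinarith

lemma integral_density_sub_left (z : ℂ) : ∫ η, density (z - η) = ∫ η, density η :=
  integral_sub_left_eq_self _ _ z

lemma annulus_integral_eq (g : ℂ → ℝ) (z : ℂ) (r : ℝ) :
    ∫ η in {η : ℂ | 1 ≤ ‖η‖ ∧ ‖η‖ ≤ r}, (g (z + η) : ℂ) / η ^ 2 =
      ∫ η in Metric.closedBall 0 r, (g (z + η) : ℂ) * cutKernel η := by
  have hm1 : MeasurableSet {η : ℂ | 1 ≤ ‖η‖ ∧ ‖η‖ ≤ r} :=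
    (measurableSet_le measurable_const measurable_norm).inter
      (measurableSet_le measurable_norm measurable_const)
  rw [← integral_indicator hm1, ← integral_indicator Metric.isClosed_closedBall.measurableSet]
  congr 1 with η
  by_cases h1 : 1 ≤ ‖η‖ <;> by_cases h2 : ‖η‖ ≤ r <;>
    simp [Set.indicator, cutKernel, h1, h2, div_eq_mul_inv]

lemma integrableOn_cutKernel {g : ℂ → ℝ} {M : ℝ} (hg : Continuous g) (hM : ∀ z, ‖g z‖ ≤ M)
    {s : Set ℂ} (hs : volume s ≠ ⊤) (τ : ℂ → ℂ) (hτ : Measurable τ) :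
    IntegrableOn (fun η => (g η : ℂ) * cutKernel (τ η)) s := by
  refine Measure.integrableOn_of_bounded (M := M) hs ?_ (Filter.Eventually.of_forall fun η => ?_)
  · exact ((continuous_ofReal.comp hg).measurable.mul
      (measurable_cutKernel.comp hτ)).aestronglyMeasurable
  · rw [norm_mul, norm_real]
    exact (mul_le_of_le_one_right (norm_nonneg _) (norm_cutKernel_le_one _)).trans (hM η)

lemma norm_setIntegral_closedBall_cutKernel_le {g : ℂ → ℝ} {M A₀ : ℝ} (hg : Continuous g)
    (hM : ∀ z, ‖g z‖ ≤ M)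
    (hA : ∀ z : ℂ, ∀ r : ℝ, 1 ≤ r →
      ‖∫ η in {η : ℂ | 1 ≤ ‖η‖ ∧ ‖η‖ ≤ r}, (g (z + η) : ℂ) / η ^ 2‖ ≤ A₀)
    {z : ℂ} {R : ℝ} (hR : 2 * ‖z‖ + 2 ≤ R) :
    ‖∫ η in Metric.closedBall 0 R, (g η : ℂ) * cutKernel (z - η)‖ ≤ A₀ + 16 * Real.pi * M := by
  have hz := norm_nonneg z
  have hM0 : 0 ≤ M := (norm_nonneg _).trans (hM 0)
  have hmz : MeasurableSet {η : ℂ | ‖z + η‖ ≤ R} :=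
    measurableSet_le (by fun_prop) measurable_const
  have hmb : MeasurableSet (Metric.closedBall (0 : ℂ) R) := Metric.isClosed_closedBall.measurableSet
  have e1 : ∫ η in Metric.closedBall 0 R, (g η : ℂ) * cutKernel (z - η) =
      ∫ η, {η : ℂ | ‖z + η‖ ≤ R}.indicator (fun η => (g (z + η) : ℂ) * cutKernel η) η := by
    rw [← integral_indicator hmb, ← integral_add_left_eq_self _ z]
    congr 1 with η
    have : z - (z + η) = -η := by ring
    simp [Set.indicator, this, cutKernel_neg]
  have hsub : {η : ℂ | ‖z + η‖ ≤ R} ⊆ Metric.closedBall 0 (2 * R) := fun η hη => by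
    have h1 : ‖η‖ ≤ ‖z + η‖ + ‖z‖ := by
      have := norm_sub_le (z + η) z; simpa using this
    simp only [Set.mem_ofPred_eq] at hη
    simp only [mem_closedBall_zero_iff]; linarith
  have hgz : Continuous fun η => g (z + η) := hg.comp (continuous_const.add continuous_id)
  have hfin : ∀ ρ : ℝ, volume (Metric.closedBall (0 : ℂ) ρ) ≠ ⊤ := fun ρ =>
    measure_closedBall_lt_top.ne
  have i1 : Integrable ({η : ℂ | ‖z + η‖ ≤ R}.indicator
      (fun η => (g (z + η) : ℂ) * cutKernel η)) :=
    (integrable_indicator_iff hmz).2 ((integrableOn_cutKernel hgz (fun w => hM _) (hfin (2 * R))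
      id measurable_id).mono_set hsub)
  have i2 : Integrable ((Metric.closedBall (0 : ℂ) R).indicator
      (fun η => (g (z + η) : ℂ) * cutKernel η)) :=
    (integrable_indicator_iff hmb).2 (integrableOn_cutKernel hgz (fun w => hM _) (hfin R)
      id measurable_id)
  have hAR := hA z R (by linarith)
  rw [annulus_integral_eq, ← integral_indicator hmb] at hAR
  rw [e1]
  refine (norm_le_norm_add_norm_sub' _ _).trans (add_le_add hAR ?_)
  rw [← integral_sub i1 i2]
  have hm2 : MeasurableSet (Metric.closedBall (0 : ℂ) (2 * R)) :=
    Metric.isClosed_closedBall.measurableSet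
  have hR0 : 0 < R := by linarith
  have hbound : ∀ η : ℂ, ‖{η : ℂ | ‖z + η‖ ≤ R}.indicator
      (fun η => (g (z + η) : ℂ) * cutKernel η) η - (Metric.closedBall (0 : ℂ) R).indicator
      (fun η => (g (z + η) : ℂ) * cutKernel η) η‖ ≤
      (Metric.closedBall (0 : ℂ) (2 * R)).indicator (fun _ => M * (4 / R ^ 2)) η := fun η => by
    have far : R / 2 ≤ ‖η‖ → ‖(g (z + η) : ℂ) * cutKernel η‖ ≤ M * (4 / R ^ 2) := fun h => by
      rw [norm_mul, norm_real]
      have := norm_cutKernel_le (by positivity : 0 < R / 2) h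
      rw [show ((R / 2) ^ 2)⁻¹ = 4 / R ^ 2 by field_simp; norm_num] at this
      exact mul_le_mul (hM _) this (norm_nonneg _) hM0
    have hnn : 0 ≤ (Metric.closedBall (0 : ℂ) (2 * R)).indicator (fun _ => M * (4 / R ^ 2)) η :=
      Set.indicator_nonneg (fun _ _ => by positivity) η
    have t1 : ‖z + η‖ ≤ ‖z‖ + ‖η‖ := norm_add_le _ _
    by_cases h1 : ‖z + η‖ ≤ R <;> by_cases h2 : ‖η‖ ≤ R
    · simpa [Set.indicator, h1, h2] using hnn
    · have h3 : ‖η‖ ≤ 2 * R := by simpa using hsub h1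
      simpa [Set.indicator, h1, h2, h3] using far (by linarith)
    · have h3 : ‖η‖ ≤ 2 * R := by linarith
      simpa [Set.indicator, h1, h2, h3] using far (by linarith)
    · simpa [Set.indicator, h1, h2] using hnn
  refine (norm_integral_le_of_norm_le ((integrable_indicator_iff hm2).2
    (integrableOn_const (hfin _))) (Filter.Eventually.of_forall hbound)).trans ?_
  rw [integral_indicator hm2, setIntegral_const, Measure.real, Complex.volume_closedBall]
  simp only [ENNReal.toReal_mul, ENNReal.toReal_pow, smul_eq_mul, ENNReal.coe_toReal]
  rw [ENNReal.toReal_ofReal (by positivity)]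
  apply le_of_eq
  simp only [NNReal.coe_real_pi]
  field_simp
  ring

lemma norm_logPotentialHessian_le {g : ℂ → ℝ} {M A₀ : ℝ} (hg : Continuous g)
    (hM : ∀ z, ‖g z‖ ≤ M)
    (hA : ∀ z : ℂ, ∀ r : ℝ, 1 ≤ r →
      ‖∫ η in {η : ℂ | 1 ≤ ‖η‖ ∧ ‖η‖ ≤ r}, (g (z + η) : ℂ) / η ^ 2‖ ≤ A₀) (z : ℂ) :
    ‖logPotentialHessian g z‖ ≤
      80 * M * (∫ η, density η) + 4 * (A₀ + 16 * Real.pi * M) := by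
  have hM0 : 0 ≤ M := (norm_nonneg _).trans (hM 0)
  have hA0 : 0 ≤ A₀ := (norm_nonneg _).trans (hA 0 1 le_rfl)
  have hI0 : 0 ≤ ∫ η, density η := integral_nonneg density_nonneg
  refine ContinuousLinearMap.opNorm_le_bound₂ _ (by positivity) fun v w => ?_
  obtain ⟨hint, heq⟩ := logPotentialHessian_apply hg hM z v w
  rw [heq]
  have hlim := (aecover_closedBall (μ := volume) (x := (0 : ℂ))
    Filter.tendsto_id).integral_tendsto_of_countably_generated hint
  refine le_of_tendsto hlim.norm (Filter.eventually_atTop.2 ⟨2 * ‖z‖ + 2, fun R hR => ?_⟩)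
  simp only [id]
  have hfin : volume (Metric.closedBall (0 : ℂ) R) ≠ ⊤ := measure_closedBall_lt_top.ne
  set B := Metric.closedBall (0 : ℂ) R with hB
  have hcut : ∀ y : ℂ, IntegrableOn (fun η => (g η : ℂ) * cutKernel (y - η)) B := fun y =>
    integrableOn_cutKernel hg hM hfin (fun η => y - η) (by fun_prop)
  have hcutre : ∀ y : ℂ, IntegrableOn (fun η => ((g η : ℂ) * cutKernel (y - η) * (v * w)).re) B :=
    fun y => reCLM.integrable_comp ((hcut y).mul_const (v * w))
  have hcutb : ∀ y : ℂ, 2 * ‖y‖ + 2 ≤ R →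
      |∫ η in B, ((g η : ℂ) * cutKernel (y - η) * (v * w)).re| ≤
        (A₀ + 16 * Real.pi * M) * (‖v‖ * ‖w‖) := fun y hy => by
    have e : ∫ η in B, ((g η : ℂ) * cutKernel (y - η) * (v * w)).re =
        ((∫ η in B, (g η : ℂ) * cutKernel (y - η)) * (v * w)).re := by
      rw [← integral_mul_const]
      exact reCLM.integral_comp_comm ((hcut y).mul_const (v * w))
    rw [e]
    refine (abs_re_le_norm _).trans ?_
    rw [norm_mul, norm_mul v w]
    exact mul_le_mul_of_nonneg_right (norm_setIntegral_closedBall_cutKernel_le hg hM hA hy)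
      (by positivity)
  set E : ℂ → ℂ → ℝ := fun y η =>
    g η * (logKernelDD (y - η) v w + 2 * (cutKernel (y - η) * (v * w)).re) with hE
  have hEle : ∀ y η, ‖E y η‖ ≤ M * (40 * (‖v‖ * ‖w‖)) * density (y - η) := fun y η => by
    rw [hE, norm_mul]
    refine (mul_le_mul (hM η) (abs_logKernelDD_add_cutKernel_le (y - η) v w)
      (abs_nonneg _) hM0).trans (le_of_eq (by ring))
  have hdi : ∀ y : ℂ, Integrable fun η => M * (40 * (‖v‖ * ‖w‖)) * density (y - η) := fun y =>
    (integrable_density.comp_sub_left y).const_mul _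
  have hEint : ∀ y, Integrable (E y) := fun y => by
    refine (hdi y).mono' ?_ (Filter.Eventually.of_forall (hEle y))
    have c2 := contDiff_logKernelDD.continuous
    refine Measurable.aestronglyMeasurable (hg.measurable.mul (Measurable.add ?_ ?_))
    · exact (by fun_prop : Continuous fun η => logKernelDD (y - η) v w).measurable
    · exact (measurable_re.comp ((measurable_cutKernel.comp
        (measurable_const.sub measurable_id)).mul_const _)).const_mul 2
  have hEb : ∀ y, |∫ η in B, E y η| ≤ M * (40 * (‖v‖ * ‖w‖)) * ∫ η, density η := fun y => by
    refine (norm_integral_le_of_norm_le (hdi y).integrableOn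
      (Filter.Eventually.of_forall (hEle y))).trans ?_
    rw [← integral_density_sub_left y, ← integral_const_mul]
    exact setIntegral_le_integral (hdi y) (Filter.Eventually.of_forall fun η => by
      have := density_nonneg (y - η); simp only [Pi.zero_apply]; positivity)
  have hdecomp : ∫ η in B, g η * (logKernelDD (z - η) v w - logKernelDD (-η) v w) =
      ((∫ η in B, E z η) - ∫ η in B, E 0 η) -
        2 * ((∫ η in B, ((g η : ℂ) * cutKernel (z - η) * (v * w)).re) -
          ∫ η in B, ((g η : ℂ) * cutKernel (0 - η) * (v * w)).re) := by
    rw [← integral_sub (hEint z).integrableOn (hEint 0).integrableOn,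
      ← integral_sub (hcutre z) (hcutre 0), ← integral_const_mul]
    refine Eq.trans ?_ (integral_sub ((hEint z).integrableOn.sub (hEint 0).integrableOn)
        (((hcutre z).sub (hcutre 0)).const_mul 2))
    congr 1 with η
    simp only [hE, mul_assoc, re_ofReal_mul, zero_sub]
    ring
  rw [hdecomp]
  have b1 := abs_le.1 (hEb z)
  have b2 := abs_le.1 (hEb 0)
  have b3 := abs_le.1 (hcutb z hR)
  have b4 := abs_le.1 (hcutb 0 (by rw [norm_zero]; linarith [norm_nonneg z]))
  rw [Real.norm_eq_abs, abs_le]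
  constructor <;> nlinarith

/-- A positive integrable kernel, one eighth of the Laplacian of `logKernel`. -/
noncomputable def bump (z : ℂ) : ℝ := ((1 + ‖z‖ ^ 2) ^ 3)⁻¹

lemma bump_pos (z : ℂ) : 0 < bump z := by unfold bump; positivity

lemma continuous_bump : Continuous bump := by
  unfold bump
  exact Continuous.inv₀ (by fun_prop) fun z => by positivity

lemma bump_mul_norm_le (z : ℂ) : bump z * ‖z‖ ≤ density z := by
  unfold bump density
  have h : ‖z‖ ≤ 1 + ‖z‖ ^ 2 := by nlinarith [sq_nonneg (‖z‖ - 1), sq_nonneg ‖z‖]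
  rw [inv_mul_le_iff₀ (by positivity)]
  calc ‖z‖ ≤ 1 + ‖z‖ ^ 2 := h
    _ = (1 + ‖z‖ ^ 2) ^ 3 * ((1 + ‖z‖ ^ 2) ^ 2)⁻¹ := by field_simp

lemma bump_le_density (z : ℂ) : bump z ≤ density z := by
  unfold bump density
  have h : 1 ≤ 1 + ‖z‖ ^ 2 := by nlinarith [sq_nonneg ‖z‖]
  gcongr
  · norm_num

lemma integrable_bump : Integrable bump :=
  integrable_density.mono' continuous_bump.aestronglyMeasurable
    (Filter.Eventually.of_forall fun z => by
      rw [Real.norm_of_nonneg (bump_pos z).le]; exact bump_le_density z)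

lemma integral_bump_pos : 0 < ∫ z, bump z := by
  rw [integral_pos_iff_support_of_nonneg (fun z => (bump_pos z).le) integrable_bump]
  have : Function.support bump = Set.univ :=
    Set.eq_univ_of_forall fun z => (bump_pos z).ne'
  rw [this]
  exact isOpen_univ.measure_pos _ Set.univ_nonempty

lemma hasFDerivAt_density (z : ℂ) : HasFDerivAt density (-(4 * bump z) • innerB z) z := by
  refine (hasFDerivAt_radial (hasDerivAt_inv_one_add_pow 1 (sq_nonneg ‖z‖))).congr_fderiv ?_
  congr 1
  simp only [bump]
  norm_num
  ring

/-- The trace of a real bilinear form on `ℂ`. -/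
noncomputable def bilinTrace (T : ℂ →L[ℝ] ℂ →L[ℝ] ℝ) : ℝ := T 1 1 + T I I

lemma hasDerivAt_bump_average {g : ℂ → ℝ} {M : ℕ → ℝ} (hg : BoundedSmooth g M) (z : ℂ) (s : ℝ) :
    HasDerivAt (fun s : ℝ => ∫ w, bump w * g (z + s • w))
      (∫ w, bump w * fderiv ℝ g (z + s • w) w) s := by
  have cg := hg.1.continuous
  have cg' := hg.fderiv.1.continuous
  have cb := continuous_bump
  refine (hasDerivAt_integral_of_dominated_loc_of_deriv_le (bound := fun w => M 1 * density w)
    (F := fun (s : ℝ) w => bump w * g (z + s • w))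
    (F' := fun s w => bump w * fderiv ℝ g (z + s • w) w)
    Filter.univ_mem (Filter.Eventually.of_forall fun s => ?_) ?_ ?_ ?_
    (integrable_density.const_mul _) ?_).2
  · exact (by fun_prop : Continuous fun w => bump w * g (z + s • w)).aestronglyMeasurable
  · exact integrable_bump.mul_bdd (c := M 0)
      (by fun_prop : Continuous fun w => g (z + s • w)).aestronglyMeasurable
      (Filter.Eventually.of_forall fun w => hg.norm_le _)
  · exact (by fun_prop : Continuous fun w =>
      bump w * fderiv ℝ g (z + s • w) w).aestronglyMeasurable
  · refine Filter.Eventually.of_forall fun w s _ => ?_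
    rw [norm_mul, Real.norm_of_nonneg (bump_pos w).le]
    calc bump w * ‖fderiv ℝ g (z + s • w) w‖ ≤ bump w * (M 1 * ‖w‖) :=
          mul_le_mul_of_nonneg_left (((fderiv ℝ g (z + s • w)).le_opNorm w).trans
            (mul_le_mul_of_nonneg_right (hg.norm_fderiv_le _) (norm_nonneg w))) (bump_pos w).le
      _ = M 1 * (bump w * ‖w‖) := by ring
      _ ≤ M 1 * density w := mul_le_mul_of_nonneg_left (bump_mul_norm_le w) (hg.nonneg 1)
  · refine Filter.Eventually.of_forall fun w s _ => ?_
    have h1 : HasDerivAt (fun s : ℝ => z + s • w) w s := by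
      simpa using ((hasDerivAt_id s).smul_const w).const_add z
    exact ((hg.hasFDerivAt _).comp_hasDerivAt s h1).const_mul _

lemma integral_bump_fderiv_eq {g : ℂ → ℝ} {M : ℕ → ℝ} (hg : BoundedSmooth g M) (z : ℂ) (s : ℝ) :
    ∫ w, bump w * fderiv ℝ g (z + s • w) w =
      ∫ w, s * (1 / 4 * density w) * bilinTrace (fderiv ℝ (fderiv ℝ g) (z + s • w)) := by
  have cb := continuous_bump
  have cd := continuous_density
  have c1 := hg.fderiv.1.continuous
  have c2 := hg.fderiv.fderiv.1.continuous
  have hd1 : ∀ v w : ℂ, HasFDerivAt (fun w => fderiv ℝ g (z + s • w) v)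
      (s • (fderiv ℝ (fderiv ℝ g) (z + s • w)).flip v) w := fun v w => by
    have h1 : HasFDerivAt (fun w : ℂ => z + s • w) (s • ContinuousLinearMap.id ℝ ℂ) w :=
      ((hasFDerivAt_id w).const_smul s).const_add z
    refine (((hg.fderiv.hasFDerivAt (z + s • w)).comp w h1).clm_apply
      (hasFDerivAt_const v w)).congr_fderiv ?_
    ext u
    simp
  have ii : ∀ v : ℂ, Integrable fun w => bump w * innerB w v * fderiv ℝ g (z + s • w) v :=
    fun v => by
    refine (integrable_density.const_mul (‖v‖ * (M 1 * ‖v‖))).mono'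
      (by fun_prop : Continuous fun w =>
        bump w * innerB w v * fderiv ℝ g (z + s • w) v).aestronglyMeasurable
      (Filter.Eventually.of_forall fun w => ?_)
    rw [norm_mul, norm_mul, Real.norm_of_nonneg (bump_pos w).le]
    have h1 : ‖fderiv ℝ g (z + s • w) v‖ ≤ M 1 * ‖v‖ :=
      ((fderiv ℝ g (z + s • w)).le_opNorm v).trans
        (mul_le_mul_of_nonneg_right (hg.norm_fderiv_le _) (norm_nonneg v))
    have h2 : bump w * ‖innerB w v‖ ≤ density w * ‖v‖ :=
      calc bump w * ‖innerB w v‖ ≤ bump w * (‖w‖ * ‖v‖) :=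
            mul_le_mul_of_nonneg_left (abs_innerB_le w v) (bump_pos w).le
        _ = (bump w * ‖w‖) * ‖v‖ := by ring
        _ ≤ density w * ‖v‖ := mul_le_mul_of_nonneg_right (bump_mul_norm_le w) (norm_nonneg v)
    exact (mul_le_mul h2 h1 (norm_nonneg _) (mul_nonneg (density_nonneg w) (norm_nonneg v))).trans
      (le_of_eq (by ring))
  have id2 : ∀ v : ℂ, Integrable fun w =>
      s * (1 / 4 * density w) * fderiv ℝ (fderiv ℝ g) (z + s • w) v v := fun v => by
    refine ((integrable_density.const_mul (1 / 4)).const_mul s).mul_bdd (c := M 2 * ‖v‖ * ‖v‖)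
      (by fun_prop : Continuous fun w =>
        fderiv ℝ (fderiv ℝ g) (z + s • w) v v).aestronglyMeasurable
      (Filter.Eventually.of_forall fun w => ?_)
    exact ((fderiv ℝ (fderiv ℝ g) (z + s • w)).le_opNorm₂ v v).trans
      (mul_le_mul_of_nonneg_right (mul_le_mul_of_nonneg_right (hg.fderiv.norm_fderiv_le _)
        (norm_nonneg v)) (norm_nonneg v))
  have id1 : ∀ v : ℂ, Integrable fun w => (1 / 4 * density w) * fderiv ℝ g (z + s • w) v :=
    fun v => by
    refine (integrable_density.const_mul (1 / 4)).mul_bdd (c := M 1 * ‖v‖)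
      (by fun_prop : Continuous fun w => fderiv ℝ g (z + s • w) v).aestronglyMeasurable
      (Filter.Eventually.of_forall fun w => ?_)
    exact ((fderiv ℝ g (z + s • w)).le_opNorm v).trans
        (mul_le_mul_of_nonneg_right (hg.norm_fderiv_le _) (norm_nonneg v))
  have ibp : ∀ v : ℂ, ∫ w, bump w * innerB w v * fderiv ℝ g (z + s • w) v =
      ∫ w, s * (1 / 4 * density w) * fderiv ℝ (fderiv ℝ g) (z + s • w) v v := fun v => by
    have e1 : ∀ w, (((1 / 4 : ℝ) • (-(4 * bump w) • innerB w)) v) * fderiv ℝ g (z + s • w) v =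
        -(bump w * innerB w v * fderiv ℝ g (z + s • w) v) := fun w => by
      simp only [smul_apply, smul_eq_mul]; ring
    have e2 : ∀ w, 1 / 4 * density w *
        ((s • (fderiv ℝ (fderiv ℝ g) (z + s • w)).flip v) v) =
        s * (1 / 4 * density w) * fderiv ℝ (fderiv ℝ g) (z + s • w) v v := fun w => by
      simp only [smul_apply, ContinuousLinearMap.flip_apply, smul_eq_mul]; ring
    have := integral_bilinear_hasFDerivAt_right_eq_neg_left_of_integrable (μ := volume)
      (B := ContinuousLinearMap.mul ℝ ℝ) (v := v)
      (f := fun w => 1 / 4 * density w) (f' := fun w => (1 / 4 : ℝ) • (-(4 * bump w) • innerB w))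
      (g := fun w => fderiv ℝ g (z + s • w) v)
      (g' := fun w => s • (fderiv ℝ (fderiv ℝ g) (z + s • w)).flip v)
      (by simp only [ContinuousLinearMap.mul_apply', e1]; exact (ii v).neg)
      (by simp only [ContinuousLinearMap.mul_apply', e2]; exact id2 v)
      (id1 v) (fun w _ => (hasFDerivAt_density w).const_mul _) (fun w _ => hd1 v w)
    simp only [ContinuousLinearMap.mul_apply', e1, e2, integral_neg, neg_neg] at this
    exact this.symm
  have e3 : ∀ w : ℂ, bump w * fderiv ℝ g (z + s • w) w =
      bump w * innerB w 1 * fderiv ℝ g (z + s • w) 1 +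
        bump w * innerB w I * fderiv ℝ g (z + s • w) I := fun w => by
    have h1 : fderiv ℝ g (z + s • w) w =
        w.re * fderiv ℝ g (z + s • w) 1 + w.im * fderiv ℝ g (z + s • w) I := by
      conv_lhs => rw [show w = w.re • (1 : ℂ) + w.im • I by
        simp only [real_smul, mul_one]; exact (re_add_im w).symm]
      simp only [map_add, map_smul, smul_eq_mul]
      simp
    rw [h1]
    simp [innerB_apply]
    ring
  simp only [e3, bilinTrace, mul_add]
  rw [integral_add (ii 1) (ii I), integral_add (id2 1) (id2 I), ibp, ibp]

lemma exists_localPotential : ∃ C : ℝ, ∀ (g : ℂ → ℝ) (M : ℕ → ℝ), BoundedSmooth g M →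
    ∃ P : ℂ → ℝ, BoundedSmooth P (fun k => C * M k) ∧
      ∀ z, bilinTrace (fderiv ℝ (fderiv ℝ P) z) = (∫ w, bump w) * g z - ∫ w, bump w * g (z + w) := by
  set μ : Measure (ℝ × ℂ) := (volume.restrict (Set.Ioc (0 : ℝ) 1)).prod volume with hμ
  set k : ℝ × ℂ → ℝ := fun a => a.1 * (1 / 4 * density a.2) with hk
  set L : ℝ × ℂ → ℝ →L[ℝ] ℝ := fun a => (-k a) • ContinuousLinearMap.id ℝ ℝ with hLdef
  set τ : ℝ × ℂ → ℂ := fun a => a.1 • a.2 with hτdef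
  have hid : Integrable (fun s : ℝ => s) (volume.restrict (Set.Ioc (0 : ℝ) 1)) :=
    (continuous_id.integrableOn_Icc).mono_set Set.Ioc_subset_Icc_self
  have hki : Integrable k μ := hid.mul_prod (integrable_density.const_mul (1 / 4))
  have hL : Integrable L μ := hki.neg.smul_const _
  have hτ : AEStronglyMeasurable τ μ :=
    (by fun_prop : Continuous τ).aestronglyMeasurable
  refine ⟨∫ a, ‖L a‖ ∂μ, fun g M hg => ⟨_, hg.average hL hτ, fun z => ?_⟩⟩
  have hL' : Integrable (fun a => ContinuousLinearMap.compL ℝ ℂ ℝ ℝ (L a)) μ :=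
    (ContinuousLinearMap.compL ℝ ℂ ℝ ℝ).integrable_comp hL
  have hL'' : Integrable (fun a => ContinuousLinearMap.compL ℝ ℂ (ℂ →L[ℝ] ℝ) (ℂ →L[ℝ] ℝ)
      (ContinuousLinearMap.compL ℝ ℂ ℝ ℝ (L a))) μ :=
    (ContinuousLinearMap.compL ℝ ℂ (ℂ →L[ℝ] ℝ) (ℂ →L[ℝ] ℝ)).integrable_comp hL'
  have d1 : fderiv ℝ (fun z => ∫ a, L a (g (z + τ a)) ∂μ) = fun z =>
      ∫ a, ContinuousLinearMap.compL ℝ ℂ ℝ ℝ (L a) (fderiv ℝ g (z + τ a)) ∂μ :=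
    funext fun z => (hasFDerivAt_average hL hτ hg z).fderiv
  rw [d1, (hasFDerivAt_average hL' hτ hg.fderiv z).fderiv]
  have i2 := integrable_average hL'' hτ hg.fderiv.fderiv.1.continuous hg.fderiv.fderiv.norm_le z
  have c2 := hg.fderiv.fderiv.1.continuous
  have cd := continuous_density
  have i3 : ∀ v : ℂ, Integrable (fun a => k a * fderiv ℝ (fderiv ℝ g) (z + τ a) v v) μ :=
    fun v => by
    refine hki.mul_bdd (c := M 2 * ‖v‖ * ‖v‖)
      (by fun_prop : Continuous fun a =>
        fderiv ℝ (fderiv ℝ g) (z + τ a) v v).aestronglyMeasurable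
      (Filter.Eventually.of_forall fun a => ?_)
    exact ((fderiv ℝ (fderiv ℝ g) (z + τ a)).le_opNorm₂ v v).trans
      (mul_le_mul_of_nonneg_right (mul_le_mul_of_nonneg_right (hg.fderiv.norm_fderiv_le _)
        (norm_nonneg v)) (norm_nonneg v))
  have i4 : Integrable (fun a => k a * bilinTrace (fderiv ℝ (fderiv ℝ g) (z + τ a))) μ := by
    simp only [bilinTrace, mul_add]
    exact (i3 1).add (i3 I)
  have e : ∀ v : ℂ, (∫ a, ContinuousLinearMap.compL ℝ ℂ (ℂ →L[ℝ] ℝ) (ℂ →L[ℝ] ℝ)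
      (ContinuousLinearMap.compL ℝ ℂ ℝ ℝ (L a)) (fderiv ℝ (fderiv ℝ g) (z + τ a)) ∂μ) v v =
      -∫ a, k a * fderiv ℝ (fderiv ℝ g) (z + τ a) v v ∂μ := fun v => by
    rw [ContinuousLinearMap.integral_apply i2,
      ContinuousLinearMap.integral_apply (i2.apply_continuousLinearMap v), ← integral_neg]
    congr 1 with a
    simp [hLdef]
  have hG := fun s : ℝ => hasDerivAt_bump_average hg z s
  simp only [integral_bump_fderiv_eq hg z] at hG
  have hint := i4.integral_prod_left
  have ftc := intervalIntegral.integral_eq_sub_of_hasDerivAt (a := 0) (b := 1)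
    (fun s _ => hG s) ((intervalIntegrable_iff_integrableOn_Ioc_of_le zero_le_one).2 hint)
  rw [intervalIntegral.integral_of_le zero_le_one] at ftc
  have h5 := integral_prod _ i4
  rw [bilinTrace, e, e, ← neg_add, ← integral_add (i3 1) (i3 I)]
  simp only [← mul_add]
  rw [neg_eq_iff_eq_neg, neg_sub]
  refine (h5.trans ftc).trans ?_
  simp [integral_mul_const]

lemma BoundedSmooth.mono {F : Type*} [NormedAddCommGroup F] [NormedSpace ℝ F] {f : ℂ → F}
    {M M' : ℕ → ℝ} (hf : BoundedSmooth f M) (h : ∀ k, M k ≤ M' k) : BoundedSmooth f M' :=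
  ⟨hf.1, fun k z => (hf.2 k z).trans (h k)⟩

lemma bilinTrace_logPotentialHessian {g : ℂ → ℝ} {M : ℝ} (hg : Continuous g)
    (hM : ∀ z, ‖g z‖ ≤ M) (z : ℂ) : bilinTrace (logPotentialHessian g z) =
      8 * ((∫ w, bump w * g (z + w)) - ∫ w, bump w * g w) := by
  have e : ∀ y : ℂ, ∫ w, bump w * g (y + w) = ∫ η, g η * bump (y - η) := fun y => by
    rw [← integral_add_left_eq_self (fun η => g η * bump (y - η)) y]
    congr 1 with w
    simp [bump, mul_comm]
  have i : ∀ y : ℂ, Integrable fun η => g η * bump (y - η) := fun y =>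
    (integrable_bump.comp_sub_left y).bdd_mul (c := M) hg.aestronglyMeasurable
      (Filter.Eventually.of_forall hM)
  have e0 := e 0
  simp only [zero_add] at e0
  obtain ⟨i1, h1⟩ := logPotentialHessian_apply hg hM z 1 1
  obtain ⟨i2, h2⟩ := logPotentialHessian_apply hg hM z I I
  rw [bilinTrace, h1, h2, e, e0, ← integral_sub (i z) (i 0), ← integral_const_mul,
    ← integral_add i1 i2]
  congr 1 with η
  have t1 := logKernelDD_trace (z - η)
  have t2 := logKernelDD_trace (-η)
  rw [← mul_add, bump, bump, zero_sub]
  linear_combination g η * t1 - g η * t2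

lemma laplacian_eq_bilinTrace (P : ℂ → ℝ) (z : ℂ) :
    laplacian P z = bilinTrace (fderiv ℝ (fderiv ℝ P) z) := by
  simp [laplacian, bilinTrace, iteratedFDeriv_two_apply]

/-- Subtracting the first order Taylor polynomial at `0` from a function with boundedly smooth
Hessian. -/
lemma exists_normalised_of_hasHessian {Q : ℂ → ℝ} {Q' : ℂ → ℂ →L[ℝ] ℝ}
    {H : ℂ → ℂ →L[ℝ] ℂ →L[ℝ] ℝ} {N : ℕ → ℝ} (hQ : ∀ z, HasFDerivAt Q (Q' z) z)
    (hQ' : ∀ z, HasFDerivAt Q' (H z) z) (hH : BoundedSmooth H N) :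
    ∃ P : ℂ → ℝ, ContDiff ℝ (⊤ : ℕ∞) P ∧ P 0 = 0 ∧ (∀ z, laplacian P z = bilinTrace (H z)) ∧
      (∀ z : ℂ, ‖fderiv ℝ P z‖ ≤ N 0 * ‖z‖) ∧
      ∀ k : ℕ, 2 ≤ k → ∀ z : ℂ, ‖iteratedFDeriv ℝ k P z‖ ≤ N (k - 2) := by
  set P : ℂ → ℝ := fun z => Q z - Q 0 - Q' 0 z with hP
  have d1 : ∀ z, HasFDerivAt P (Q' z - Q' 0) z := fun z =>
    ((hQ z).sub_const _).sub (Q' 0).hasFDerivAt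
  have d2 : ∀ z, HasFDerivAt (fun z => Q' z - Q' 0) (H z) z := fun z => (hQ' z).sub_const _
  have f1 : fderiv ℝ P = fun z => Q' z - Q' 0 := funext fun z => (d1 z).fderiv
  have f2 : fderiv ℝ (fderiv ℝ P) = H := by rw [f1]; exact funext fun z => (d2 z).fderiv
  refine ⟨P, ?_, by simp [hP], fun z => by rw [laplacian_eq_bilinTrace, f2], fun z => ?_, ?_⟩
  · rw [contDiff_infty_iff_fderiv, contDiff_infty_iff_fderiv, f2, f1]
    exact ⟨fun z => (d1 z).differentiableAt, fun z => (d2 z).differentiableAt, hH.1⟩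
  · rw [f1]
    have := convex_univ.norm_image_sub_le_of_norm_hasFDerivWithin_le (𝕜 := ℝ)
      (fun x _ => (hQ' x).hasFDerivWithinAt) (fun x _ => hH.norm_le x) (Set.mem_univ 0)
      (Set.mem_univ z)
    simpa using this
  · intro k hk z
    obtain ⟨k, rfl⟩ := Nat.exists_eq_add_of_le' hk
    rw [← norm_iteratedFDeriv_fderiv, ← norm_iteratedFDeriv_fderiv, f2]
    exact hH.2 k z

lemma exists_potential_of_annulus_bound {h : ℂ → ℝ} {M : ℕ → ℝ} {A₀ : ℝ} (hh : BoundedSmooth h M)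
    (hA : ∀ ζ : ℂ, ∀ r : ℝ, 1 ≤ r →
      ‖∫ η in {η : ℂ | 1 ≤ ‖η‖ ∧ ‖η‖ ≤ r}, (h (ζ + η) : ℂ) / η ^ 2‖ ≤ A₀) :
    ∃ A : ℕ → ℝ, ∀ ζ : ℂ, ∃ P : ℂ → ℝ, ContDiff ℝ (⊤ : ℕ∞) P ∧ P 0 = 0 ∧
        (∀ z, laplacian P z = h (ζ + z)) ∧
        (∀ z : ℂ, ‖fderiv ℝ P z‖ ≤ A 1 * ‖z‖) ∧
        (∀ k : ℕ, 2 ≤ k → ∀ z : ℂ, ‖iteratedFDeriv ℝ k P z‖ ≤ A k) := by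
  obtain ⟨C₁, hC₁⟩ := exists_localPotential
  obtain ⟨C₂, hC₂⟩ := exists_boundedSmooth_fderiv_logPotentialHessian
  set m : ℝ := ∫ w, bump w with hm
  have hm0 : 0 < m := integral_bump_pos
  set C₃ : ℝ := 80 * M 0 * (∫ η, density η) + 4 * (A₀ + 16 * Real.pi * M 0) with hC₃
  set N : ℕ → ℝ := fun k => |m⁻¹| * (C₁ * M (k + 1 + 1) +
    |(1 / 8 : ℝ)| * (if k = 0 then C₃ else C₂ * M (k - 1)) + m * M 0 / 2) with hN
  refine ⟨fun k => N (k - 2), fun ζ => ?_⟩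
  set g : ℂ → ℝ := fun z => h (ζ + z) with hgdef
  have hg : BoundedSmooth g M := hh.comp_const_add ζ
  have hgA : ∀ z : ℂ, ∀ r : ℝ, 1 ≤ r →
      ‖∫ η in {η : ℂ | 1 ≤ ‖η‖ ∧ ‖η‖ ≤ r}, (g (z + η) : ℂ) / η ^ 2‖ ≤ A₀ := fun z r hr => by
    simpa only [hgdef, ← add_assoc] using hA (ζ + z) r hr
  obtain ⟨P₀, hP₀, hP₀t⟩ := hC₁ g M hg
  obtain ⟨T, hT, hTb⟩ := hC₂ g M hg
  obtain ⟨P₁, P₁', hP₁, hP₁'⟩ := exists_hasHessian_logPotential hg.1.continuous hg.norm_le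
  have hLPH := BoundedSmooth.of_hasFDerivAt hT
    (norm_logPotentialHessian_le hg.1.continuous hg.norm_le hgA) hTb
  set c : ℝ := ∫ w, bump w * g w with hc
  have hcle : |c| ≤ m * M 0 := by
    rw [hm, ← integral_mul_const, ← Real.norm_eq_abs]
    refine norm_integral_le_of_norm_le (integrable_bump.mul_const _)
      (Filter.Eventually.of_forall fun w => ?_)
    rw [norm_mul, Real.norm_of_nonneg (bump_pos w).le]
    exact mul_le_mul_of_nonneg_left (hg.norm_le w) (bump_pos w).le
  have hconst : BoundedSmooth (fun _ : ℂ => (c / 2) • innerB) (fun _ => m * M 0 / 2) :=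
    (BoundedSmooth.const ((c / 2) • innerB)).mono fun _ => by
      rw [norm_smul, Real.norm_eq_abs, abs_div, abs_two]
      have h2 : |c| / 2 * ‖innerB‖ ≤ |c| / 2 * 1 :=
        mul_le_mul_of_nonneg_left norm_innerB_le (by positivity)
      linarith
  have hH := ((hP₀.fderiv.fderiv.add (hLPH.const_smul (1 / 8))).add hconst).const_smul m⁻¹
  have hQ : ∀ z, HasFDerivAt
      (fun z => m⁻¹ • (P₀ z + (1 / 8 : ℝ) • P₁ z + c / 4 * ‖z‖ ^ 2))
      (m⁻¹ • (fderiv ℝ P₀ z + (1 / 8 : ℝ) • P₁' z + (2 * (c / 4)) • innerB z)) z := fun z =>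
    (((hP₀.hasFDerivAt z).add ((hP₁ z).const_smul (1 / 8 : ℝ))).add
      (hasFDerivAt_radial (φ := fun s => c / 4 * s)
        (by simpa using (hasDerivAt_id (‖z‖ ^ 2)).const_mul (c / 4)))).const_smul m⁻¹
  have hQ' : ∀ z, HasFDerivAt
      (fun z => m⁻¹ • (fderiv ℝ P₀ z + (1 / 8 : ℝ) • P₁' z + (2 * (c / 4)) • innerB z))
      (m⁻¹ • (fderiv ℝ (fderiv ℝ P₀) z + (1 / 8 : ℝ) • logPotentialHessian g z +
        (c / 2) • innerB)) z := fun z =>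
    ((((hP₀.fderiv.hasFDerivAt z).add ((hP₁' z).const_smul (1 / 8 : ℝ))).add
      (innerB.hasFDerivAt.const_smul (2 * (c / 4)))).const_smul m⁻¹).congr_fderiv (by
        rw [show 2 * (c / 4) = c / 2 by ring])
  obtain ⟨P, p1, p2, p3, p4, p5⟩ := exists_normalised_of_hasHessian hQ hQ' hH
  refine ⟨P, p1, p2, fun z => ?_, p4, p5⟩
  have t1 := hP₀t z
  have t2 := bilinTrace_logPotentialHessian hg.1.continuous hg.norm_le z
  rw [p3]
  simp only [bilinTrace] at t1 t2 ⊢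
  simp only [smul_apply, add_apply, smul_eq_mul, innerB_apply, one_re, one_im, I_re, I_im]
  have : m * g z = m * h (ζ + z) := rfl
  field_simp
  linarith

/-- The radial coefficient of `truncKernel`. -/
noncomputable def truncCoeff (R s : ℝ) : ℝ := ((1 + s) ^ 2)⁻¹ * (1 + s / R)⁻¹

/-- The derivative of `truncCoeff R`. -/
noncomputable def truncCoeffD (R s : ℝ) : ℝ :=
  -(2 * ((1 + s) ^ 3)⁻¹ * (1 + s / R)⁻¹) - ((1 + s) ^ 2)⁻¹ * (((1 + s / R) ^ 2)⁻¹ / R)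

lemma hasDerivAt_truncCoeff {R s : ℝ} (hR : 1 ≤ R) (hs : 0 ≤ s) :
    HasDerivAt (truncCoeff R) (truncCoeffD R s) s := by
  have h1 : HasDerivAt (fun s : ℝ => (1 + s / R)⁻¹) (-((1 + s / R) ^ 2)⁻¹ * (1 / R)) s :=
    HasDerivAt.comp (h₂ := fun t : ℝ => (1 + t)⁻¹) s
      (hasDerivAt_inv_one_add (by positivity : 0 ≤ s / R)) ((hasDerivAt_id s).div_const R)
  refine ((hasDerivAt_inv_one_add_pow 1 hs).mul h1).congr_deriv ?_
  simp only [truncCoeffD]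
  norm_num
  ring

section Estimates

variable {R s : ℝ}

lemma truncCoeff_nonneg (hR : 1 ≤ R) (hs : 0 ≤ s) : 0 ≤ truncCoeff R s := by
  unfold truncCoeff; positivity

lemma inv_one_add_div_le (hR : 1 ≤ R) (hs : 0 ≤ s) : (1 + s / R)⁻¹ ≤ R * (1 + s)⁻¹ := by
  have hR0 : 0 < R := by linarith
  rw [show 1 + s / R = (R + s) / R by field_simp, inv_div, div_eq_mul_inv]
  gcongr

lemma inv_one_add_mul_le_one (hs : 0 ≤ s) : (1 + s)⁻¹ * s ≤ 1 := by
  rw [inv_mul_le_iff₀ (by positivity)]; linarith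

lemma truncCoeff_le (hR : 1 ≤ R) (hs : 0 ≤ s) : truncCoeff R s ≤ R * ((1 + s) ^ 3)⁻¹ := by
  have := mul_le_mul_of_nonneg_left (inv_one_add_div_le hR hs)
    (by positivity : 0 ≤ ((1 + s) ^ 2)⁻¹)
  refine this.trans (le_of_eq ?_)
  field_simp

lemma abs_truncCoeffD_mul_le (hR : 1 ≤ R) (hs : 0 ≤ s) :
    |truncCoeffD R s| * s ≤ 3 * R * ((1 + s) ^ 3)⁻¹ := by
  have hR0 : 0 < R := by linarith
  have h1 := inv_one_add_div_le hR hs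
  have h2 := inv_one_add_mul_le_one hs
  rw [truncCoeffD, ← neg_add', abs_neg, abs_of_nonneg (by positivity)]
  simp only [← inv_pow]
  have hq1 : (1 + s / R)⁻¹ ≤ 1 := inv_le_one_of_one_le₀ (by
    have : 0 ≤ s / R := by positivity
    linarith)
  have hq0 : 0 < (1 + s / R)⁻¹ := by positivity
  have hn0 : 0 < (1 + s)⁻¹ := by positivity
  set n := (1 + s)⁻¹
  set q := (1 + s / R)⁻¹
  have h3 : q ^ 2 / R ≤ R * n ^ 2 := by
    rw [div_le_iff₀ hR0]
    have : q ^ 2 ≤ (R * n) ^ 2 := by gcongr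
    nlinarith
  calc (2 * n ^ 3 * q + n ^ 2 * (q ^ 2 / R)) * s
      ≤ (2 * n ^ 3 * (R * n) + n ^ 2 * (R * n ^ 2)) * s := by gcongr
    _ = 3 * R * n ^ 3 * (n * s) := by ring
    _ ≤ 3 * R * n ^ 3 * 1 := by gcongr
    _ = 3 * R * n ^ 3 := by ring

lemma mul_abs_two_mul_truncCoeff_add_le (hR : 1 ≤ R) (hs : 0 ≤ s) :
    s * |2 * truncCoeff R s + s * truncCoeffD R s| ≤
      2 * ((1 + s) ^ 2)⁻¹ + ((1 + s / R) ^ 2)⁻¹ / R := by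
  have hR0 : 0 < R := by linarith
  have h2 := inv_one_add_mul_le_one hs
  have e : 2 * truncCoeff R s + s * truncCoeffD R s =
      2 * ((1 + s) ^ 3)⁻¹ * (1 + s / R)⁻¹ - s * ((1 + s) ^ 2)⁻¹ * (((1 + s / R) ^ 2)⁻¹ / R) := by
    have e1 : ((1 + s) ^ 2)⁻¹ = ((1 + s) ^ 3)⁻¹ * (1 + s) := by field_simp
    rw [truncCoeff, truncCoeffD, mul_sub, ← mul_assoc s]
    conv_lhs => rw [e1]
    rw [e1]
    ring
  rw [e]
  have hq1 : (1 + s / R)⁻¹ ≤ 1 := inv_le_one_of_one_le₀ (by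
    have : 0 ≤ s / R := by positivity
    linarith)
  simp only [← inv_pow]
  have hq0 : 0 < (1 + s / R)⁻¹ := by positivity
  have hn0 : 0 < (1 + s)⁻¹ := by positivity
  set n := (1 + s)⁻¹
  set q := (1 + s / R)⁻¹
  have b1 : s * (2 * n ^ 3 * q) ≤ 2 * n ^ 2 := by
    calc s * (2 * n ^ 3 * q) ≤ s * (2 * n ^ 3 * 1) := by gcongr
      _ = 2 * n ^ 2 * (n * s) := by ring
      _ ≤ 2 * n ^ 2 * 1 := by gcongr
      _ = _ := by ring
  have b2 : s * (s * n ^ 2 * (q ^ 2 / R)) ≤ q ^ 2 / R := by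
    calc s * (s * n ^ 2 * (q ^ 2 / R)) = (n * s) ^ 2 * (q ^ 2 / R) := by ring
      _ ≤ 1 ^ 2 * (q ^ 2 / R) := by gcongr
      _ = _ := by ring
  have b3 : 0 ≤ s * (2 * n ^ 3 * q) := by positivity
  have b4 : 0 ≤ s * (s * n ^ 2 * (q ^ 2 / R)) := by positivity
  rw [← abs_of_nonneg hs, ← abs_mul, abs_of_nonneg hs, mul_sub, abs_le]
  constructor <;> linarith

lemma mul_truncCoeff_le_of_le_one (hR : 1 ≤ R) (hs : 0 ≤ s) (h : s ≤ 1) :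
    s * truncCoeff R s ≤ ((1 + s) ^ 2)⁻¹ := by
  have hq1 : (1 + s / R)⁻¹ ≤ 1 := inv_le_one_of_one_le₀ (by
    have : 0 ≤ s / R := by positivity
    linarith)
  have hn0 : 0 < ((1 + s) ^ 2)⁻¹ := by positivity
  have hq0 : 0 < (1 + s / R)⁻¹ := by positivity
  unfold truncCoeff
  calc s * (((1 + s) ^ 2)⁻¹ * (1 + s / R)⁻¹) ≤ 1 * (((1 + s) ^ 2)⁻¹ * 1) := by gcongr
    _ = _ := by ring

lemma mul_truncCoeff_le_of_le (hR : 1 ≤ R) (h : R ≤ s) :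
    s * truncCoeff R s ≤ 2 * (((1 + s / R) ^ 2)⁻¹ / R) := by
  have hR0 : 0 < R := by linarith
  have hs : 0 < s := by linarith
  have e : (1 + s / R)⁻¹ = R / (R + s) := by field_simp
  unfold truncCoeff
  rw [← inv_pow (1 + s / R), e]
  have h1 : s * ((1 + s) ^ 2)⁻¹ ≤ 1 / s := by
    rw [← div_eq_mul_inv, div_le_div_iff₀ (by positivity) hs]; nlinarith
  have h2 : 1 / s ≤ 2 / (R + s) := by
    rw [div_le_div_iff₀ hs (by positivity)]; linarith
  calc s * (((1 + s) ^ 2)⁻¹ * (R / (R + s))) = (s * ((1 + s) ^ 2)⁻¹) * (R / (R + s)) := by ring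
    _ ≤ (2 / (R + s)) * (R / (R + s)) := by gcongr; exact h1.trans h2
    _ = _ := by field_simp

lemma mul_abs_sub_truncCoeff_le (hR : 1 ≤ R) (h1 : 1 ≤ s) (h2 : s ≤ R) :
    s * |(s ^ 2)⁻¹ - truncCoeff R s| ≤
      4 * ((1 + s) ^ 2)⁻¹ + 4 * (((1 + s / R) ^ 2)⁻¹ / R) := by
  have hR0 : 0 < R := by linarith
  have hs : 0 < s := by linarith
  have hsR : s / R ≤ 1 := (div_le_one hR0).2 h2
  have hsR0 : 0 < s / R := by positivity
  have hq0 : 0 < (1 + s / R)⁻¹ := by positivity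
  have hq1 : (1 + s / R)⁻¹ ≤ 1 := inv_le_one_of_one_le₀ (by linarith)
  have hqe : (1 + s / R)⁻¹ * (1 + s / R) = 1 := inv_mul_cancel₀ (by positivity)
  have hn0 : 0 < (1 + s)⁻¹ := by positivity
  have hne : (1 + s)⁻¹ * (1 + s) = 1 := inv_mul_cancel₀ (by positivity)
  have hsi : s⁻¹ ≤ 2 * (1 + s)⁻¹ := by
    rw [← div_eq_mul_inv, ← one_div, div_le_div_iff₀ hs (by positivity)]; linarith
  have hsi0 : 0 < s⁻¹ := by positivity
  unfold truncCoeff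
  simp only [← inv_pow]
  have ht : s⁻¹ * (s / R) = 1 / R := by field_simp
  have hss : s⁻¹ * s = 1 := inv_mul_cancel₀ hs.ne'
  set n := (1 + s)⁻¹
  set q := (1 + s / R)⁻¹
  set t := s / R
  have hns : n * s = 1 - n := by linarith
  have hn1 : n ≤ 1 := by nlinarith
  have hq2 : 1 - t ≤ q := by nlinarith
  have hq3 : 1 / 2 ≤ q := by nlinarith
  have hc : (n * s) ^ 2 ≤ 1 := by rw [hns]; nlinarith
  have hb : 1 - (n * s) ^ 2 * q ≤ 2 * n + t := by
    have h3 : (n * s) ^ 2 * (1 - q) ≤ 1 * (1 - q) :=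
      mul_le_mul_of_nonneg_right hc (by linarith)
    have h4 : 1 - (n * s) ^ 2 ≤ 2 * n := by rw [hns]; nlinarith
    linarith
  have hb0 : 0 ≤ 1 - (n * s) ^ 2 * q := by nlinarith [sq_nonneg (n * s)]
  have e : s * (s⁻¹ ^ 2 - n ^ 2 * q) = s⁻¹ * (1 - (n * s) ^ 2 * q) := by
    linear_combination (s⁻¹ + n ^ 2 * q * s) * hss
  rw [← abs_of_pos hs, ← abs_mul, abs_of_pos hs, e, abs_of_nonneg (by positivity)]
  calc s⁻¹ * (1 - (n * s) ^ 2 * q) ≤ s⁻¹ * (2 * n + t) := by gcongr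
    _ = s⁻¹ * (2 * n) + 1 / R := by rw [mul_add, ht]
    _ ≤ 2 * n * (2 * n) + 4 * (q ^ 2 / R) := by
      gcongr
      rw [← mul_div_assoc]
      gcongr
      nlinarith
    _ = _ := by ring

end Estimates

/-- A smooth approximation of the kernel `1 / z ^ 2` on the annulus `1 ≤ ‖z‖ ≤ √R`. -/
noncomputable def truncKernel (R : ℝ) (z : ℂ) : ℂ :=
  truncCoeff R (‖z‖ ^ 2) * (starRingEnd ℂ z) ^ 2

lemma norm_truncKernel {R : ℝ} (hR : 1 ≤ R) (z : ℂ) :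
    ‖truncKernel R z‖ = ‖z‖ ^ 2 * truncCoeff R (‖z‖ ^ 2) := by
  rw [truncKernel, norm_mul, norm_real, Real.norm_of_nonneg (truncCoeff_nonneg hR (sq_nonneg _))]
  simp [mul_comm]

lemma hasFDerivAt_truncKernel {R : ℝ} (hR : 1 ≤ R) (z : ℂ) :
    DifferentiableAt ℝ (truncKernel R) z ∧ ∀ v, fderiv ℝ (truncKernel R) z v =
      truncCoeff R (‖z‖ ^ 2) * (2 * (starRingEnd ℂ z) * starRingEnd ℂ v) +
        2 * truncCoeffD R (‖z‖ ^ 2) * innerB z v * (starRingEnd ℂ z) ^ 2 := by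
  have h1 := hasFDerivAt_radial (hasDerivAt_truncCoeff hR (sq_nonneg ‖z‖))
  have h2 : HasFDerivAt (fun z : ℂ => (starRingEnd ℂ) z) (conjCLE : ℂ →L[ℝ] ℂ) z :=
    conjCLE.toContinuousLinearMap.hasFDerivAt
  have h3 := (ofRealCLM.hasFDerivAt.comp z h1).mul (h2.mul h2)
  have h4 : HasFDerivAt (truncKernel R) _ z :=
    h3.congr_of_eventuallyEq (Filter.Eventually.of_forall fun w => by simp [truncKernel, pow_two])
  refine ⟨h4.differentiableAt, fun v => ?_⟩
  rw [h4.fderiv]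
  simp
  ring

/-- The rescaled density `density (z / r) / r ^ 2`. -/
noncomputable def scaledDensity (r : ℝ) (z : ℂ) : ℝ := (r ^ 2)⁻¹ * density (r⁻¹ • z)

lemma scaledDensity_eq (r : ℝ) (z : ℂ) :
    scaledDensity r z = ((1 + ‖z‖ ^ 2 / r ^ 2) ^ 2)⁻¹ / r ^ 2 := by
  rw [scaledDensity, density, norm_smul, mul_pow, norm_inv, Real.norm_eq_abs, inv_pow, sq_abs]
  ring

lemma integrable_scaledDensity {r : ℝ} (hr : 1 ≤ r) : Integrable (scaledDensity r) :=
  ((integrable_comp_smul_iff volume density (by positivity : r⁻¹ ≠ 0)).2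
    integrable_density).const_mul _

lemma integral_scaledDensity {r : ℝ} (hr : 1 ≤ r) :
    ∫ z, scaledDensity r z = ∫ z, density z := by
  simp only [scaledDensity]
  rw [integral_const_mul, Measure.integral_comp_inv_smul, Complex.finrank_real_complex,
    abs_of_nonneg (by positivity), smul_eq_mul, ← mul_assoc, inv_mul_cancel₀ (by positivity),
    one_mul]

lemma norm_indicator_cutKernel_sub_truncKernel_le {r : ℝ} (hr : 1 ≤ r) (z : ℂ) :
    ‖(Metric.closedBall (0 : ℂ) r).indicator cutKernel z - truncKernel (r ^ 2) z‖ ≤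
      4 * density z + 4 * scaledDensity r z := by
  have hR : 1 ≤ r ^ 2 := one_le_pow₀ hr
  have hd := density_nonneg z
  have hsd : 0 ≤ scaledDensity r z := by
    have := density_nonneg (r⁻¹ • z); unfold scaledDensity; positivity
  by_cases h1 : 1 ≤ ‖z‖
  · have hs1 : 1 ≤ ‖z‖ ^ 2 := one_le_pow₀ h1
    by_cases h2 : ‖z‖ ≤ r
    · have hs2 : ‖z‖ ^ 2 ≤ r ^ 2 := by gcongr
      have hz0 : z ≠ 0 := by rintro rfl; norm_num at h1
      have hk : (Metric.closedBall (0 : ℂ) r).indicator cutKernel z =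
          ((((‖z‖ ^ 2) ^ 2)⁻¹ : ℝ) : ℂ) * (starRingEnd ℂ z) ^ 2 := by
        have h3 : ((‖z‖ ^ 2 : ℝ) : ℂ) = starRingEnd ℂ z * z := by
          rw [mul_comm, mul_conj, normSq_eq_norm_sq]
        rw [Set.indicator_of_mem (by simpa using h2), cutKernel, if_pos h1, ofReal_inv, ofReal_pow,
          h3]
        have hc : starRingEnd ℂ z ≠ 0 := by simpa using hz0
        field_simp
      have := mul_abs_sub_truncCoeff_le hR hs1 hs2
      rw [← scaledDensity_eq] at this
      rw [hk, truncKernel, ← sub_mul, ← ofReal_sub, norm_mul, norm_real, norm_pow,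
        RCLike.norm_conj, mul_comm]
      exact this
    · have hs2 : r ^ 2 ≤ ‖z‖ ^ 2 := by gcongr; exact (not_le.1 h2).le
      rw [Set.indicator_of_notMem (by simpa using h2), zero_sub, norm_neg, norm_truncKernel hR]
      have := mul_truncCoeff_le_of_le hR hs2
      rw [← scaledDensity_eq] at this
      linarith
  · have hk : (Metric.closedBall (0 : ℂ) r).indicator cutKernel z = 0 := by
      simp [Set.indicator, cutKernel, h1]
    rw [hk, zero_sub, norm_neg, norm_truncKernel hR]
    have := mul_truncCoeff_le_of_le_one hR (sq_nonneg ‖z‖)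
      (pow_le_one₀ (norm_nonneg z) (not_le.1 h1).le)
    rw [← density] at this
    linarith

/-- Twice the Wirtinger derivative `∂P/∂z`. -/
noncomputable def wirtinger (P : ℂ → ℝ) (z : ℂ) : ℂ := fderiv ℝ P z 1 - I * fderiv ℝ P z I

section Potential

variable {P : ℂ → ℝ}

lemma norm_wirtinger_le (P : ℂ → ℝ) (z : ℂ) : ‖wirtinger P z‖ ≤ 2 * ‖fderiv ℝ P z‖ := by
  refine (norm_sub_le _ _).trans ?_
  have h1 := (fderiv ℝ P z).le_opNorm 1
  have h2 := (fderiv ℝ P z).le_opNorm I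
  simp only [norm_one, norm_I, mul_one] at h1 h2
  rw [norm_mul, norm_I, one_mul, norm_real, norm_real]
  linarith

lemma fderiv_wirtinger (hP : ContDiff ℝ (⊤ : ℕ∞) P) (z : ℂ) :
    DifferentiableAt ℝ (wirtinger P) z ∧ ∀ v, fderiv ℝ (wirtinger P) z v =
      fderiv ℝ (fderiv ℝ P) z v 1 - I * fderiv ℝ (fderiv ℝ P) z v I := by
  have h : HasFDerivAt (fderiv ℝ P) (fderiv ℝ (fderiv ℝ P) z) z :=
    ((hP.fderiv_right (m := (⊤ : ℕ∞)) (by exact_mod_cast le_top)).differentiable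
      (by simp) z).hasFDerivAt
  have hv : ∀ v : ℂ, HasFDerivAt (fun z => ((fderiv ℝ P z v : ℝ) : ℂ)) _ z := fun v =>
    ofRealCLM.hasFDerivAt.comp z (h.clm_apply (hasFDerivAt_const v z))
  have h2 : HasFDerivAt (wirtinger P) _ z := (hv 1).sub ((hv I).const_mul I)
  refine ⟨h2.differentiableAt, fun v => ?_⟩
  rw [h2.fderiv]
  simp

lemma fderiv_wirtinger_add (hP : ContDiff ℝ (⊤ : ℕ∞) P) (z : ℂ) :
    fderiv ℝ (wirtinger P) z 1 + I * fderiv ℝ (wirtinger P) z I = laplacian P z := by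
  have hs : fderiv ℝ (fderiv ℝ P) z 1 I = fderiv ℝ (fderiv ℝ P) z I 1 :=
    (hP.contDiffAt.isSymmSndFDerivAt (by
      simp only [minSmoothness_of_isRCLikeNormedField]
      exact WithTop.coe_le_coe.2 (le_top : (2 : ℕ∞) ≤ ⊤))) 1 I
  rw [(fderiv_wirtinger hP z).2, (fderiv_wirtinger hP z).2, laplacian_eq_bilinTrace, bilinTrace, hs]
  push_cast
  linear_combination (-(fderiv ℝ (fderiv ℝ P) z I I : ℂ)) * I_sq

lemma norm_fderiv_wirtinger_le (hP : ContDiff ℝ (⊤ : ℕ∞) P) (z v : ℂ) :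
    ‖fderiv ℝ (wirtinger P) z v‖ ≤ 2 * ‖iteratedFDeriv ℝ 2 P z‖ * ‖v‖ := by
  have e : ‖fderiv ℝ (fderiv ℝ P) z‖ = ‖iteratedFDeriv ℝ 2 P z‖ := by
    rw [← norm_iteratedFDeriv_one, norm_iteratedFDeriv_fderiv]
  rw [(fderiv_wirtinger hP z).2, ← e]
  refine (norm_sub_le _ _).trans ?_
  have h1 := (fderiv ℝ (fderiv ℝ P) z).le_opNorm₂ v 1
  have h2 := (fderiv ℝ (fderiv ℝ P) z).le_opNorm₂ v I
  simp only [norm_one, norm_I, mul_one] at h1 h2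
  rw [norm_mul, norm_I, one_mul, norm_real, norm_real]
  linarith

end Potential

lemma sq_norm_mul_bump_le (z : ℂ) : ‖z‖ ^ 2 * bump z ≤ density z := by
  unfold bump density
  have h := inv_one_add_mul_le_one (sq_nonneg ‖z‖)
  calc ‖z‖ ^ 2 * ((1 + ‖z‖ ^ 2) ^ 3)⁻¹
      = ((1 + ‖z‖ ^ 2) ^ 2)⁻¹ * ((1 + ‖z‖ ^ 2)⁻¹ * ‖z‖ ^ 2) := by field_simp
    _ ≤ ((1 + ‖z‖ ^ 2) ^ 2)⁻¹ * 1 := by gcongr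
    _ = _ := by ring

lemma norm_pow_three_mul_bump_le (z : ℂ) : ‖z‖ ^ 3 * bump z ≤ weight z := by
  unfold bump weight
  have h : ‖z‖ ≤ √(1 + ‖z‖ ^ 2) := Real.le_sqrt_of_sq_le (by linarith)
  have h0 : 0 < √(1 + ‖z‖ ^ 2) := by positivity
  have h2 : 1 + ‖z‖ ^ 2 = √(1 + ‖z‖ ^ 2) ^ 2 := (Real.sq_sqrt (by positivity)).symm
  rw [show (1 + ‖z‖ ^ 2) ^ 3 = √(1 + ‖z‖ ^ 2) ^ 6 by conv_lhs => rw [h2]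
                                                     ring]
  calc ‖z‖ ^ 3 * (√(1 + ‖z‖ ^ 2) ^ 6)⁻¹
      ≤ √(1 + ‖z‖ ^ 2) ^ 3 * (√(1 + ‖z‖ ^ 2) ^ 6)⁻¹ := by gcongr
    _ = _ := by field_simp

lemma norm_truncKernel_le {R : ℝ} (hR : 1 ≤ R) (z : ℂ) :
    ‖truncKernel R z‖ ≤ R * (‖z‖ ^ 2 * bump z) := by
  rw [norm_truncKernel hR]
  have := mul_le_mul_of_nonneg_left (truncCoeff_le hR (sq_nonneg ‖z‖)) (sq_nonneg ‖z‖)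
  rw [← bump] at this
  linarith

lemma norm_fderiv_truncKernel_le {R : ℝ} (hR : 1 ≤ R) (z v : ℂ) :
    ‖fderiv ℝ (truncKernel R) z v‖ ≤ 8 * R * (‖z‖ * bump z) * ‖v‖ := by
  rw [(hasFDerivAt_truncKernel hR z).2]
  have h1 := truncCoeff_le hR (sq_nonneg ‖z‖)
  have h2 := abs_truncCoeffD_mul_le hR (sq_nonneg ‖z‖)
  have h3 := truncCoeff_nonneg hR (sq_nonneg ‖z‖)
  have h4 := abs_innerB_le z v
  rw [← bump] at h1 h2
  refine (norm_add_le _ _).trans ?_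
  simp only [norm_mul, norm_real, norm_pow, RCLike.norm_conj, Real.norm_eq_abs, abs_of_nonneg h3,
    norm_ofNat]
  set c := truncCoeff R (‖z‖ ^ 2)
  set d := |truncCoeffD R (‖z‖ ^ 2)|
  have hd : 0 ≤ d := abs_nonneg _
  calc c * (2 * ‖z‖ * ‖v‖) + 2 * d * |innerB z v| * ‖z‖ ^ 2
      ≤ c * (2 * ‖z‖ * ‖v‖) + 2 * d * (‖z‖ * ‖v‖) * ‖z‖ ^ 2 := by gcongr
    _ = 2 * ‖z‖ * ‖v‖ * (c + d * ‖z‖ ^ 2) := by ring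
    _ ≤ 2 * ‖z‖ * ‖v‖ * (R * bump z + 3 * R * bump z) := by gcongr
    _ = _ := by ring

lemma norm_fderiv_truncKernel_add_le {r : ℝ} (hr : 1 ≤ r) (z : ℂ) :
    ‖fderiv ℝ (truncKernel (r ^ 2)) z 1 + I * fderiv ℝ (truncKernel (r ^ 2)) z I‖ * ‖z‖ ≤
      2 * (2 * density z + scaledDensity r z) := by
  have hR : 1 ≤ r ^ 2 := one_le_pow₀ hr
  have h := mul_abs_two_mul_truncCoeff_add_le hR (sq_nonneg ‖z‖)
  rw [← density, ← scaledDensity_eq] at h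
  rw [(hasFDerivAt_truncKernel hR z).2, (hasFDerivAt_truncKernel hR z).2]
  set c := truncCoeff (r ^ 2) (‖z‖ ^ 2)
  set d := truncCoeffD (r ^ 2) (‖z‖ ^ 2)
  have hz : starRingEnd ℂ z * z = ((‖z‖ ^ 2 : ℝ) : ℂ) := by
    rw [mul_comm, mul_conj, normSq_eq_norm_sq]
  have hre : (innerB z 1 : ℂ) + I * (innerB z I : ℂ) = z := by
    simp [innerB_apply, mul_comm I]
  have e : c * (2 * starRingEnd ℂ z * starRingEnd ℂ 1) +
      2 * d * innerB z 1 * starRingEnd ℂ z ^ 2 +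
      I * (c * (2 * starRingEnd ℂ z * starRingEnd ℂ I) +
        2 * d * innerB z I * starRingEnd ℂ z ^ 2) =
      2 * starRingEnd ℂ z * ((2 * c + ‖z‖ ^ 2 * d : ℝ) : ℂ) := by
    rw [conj_I, map_one]
    push_cast at hz ⊢
    linear_combination 2 * d * starRingEnd ℂ z ^ 2 * hre + 2 * d * starRingEnd ℂ z * hz
      - 2 * c * starRingEnd ℂ z * I_sq
  rw [e, norm_mul, norm_mul, norm_real, RCLike.norm_conj, norm_ofNat, Real.norm_eq_abs]
  calc 2 * ‖z‖ * |2 * c + ‖z‖ ^ 2 * d| * ‖z‖ = 2 * (‖z‖ ^ 2 * |2 * c + ‖z‖ ^ 2 * d|) := by ring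
    _ ≤ _ := by linarith

lemma norm_annulus_integral_le_of_potential {g P : ℂ → ℝ} {M A₁ A₂ : ℝ} (hg : Continuous g)
    (hM : ∀ z, ‖g z‖ ≤ M) (hP : ContDiff ℝ (⊤ : ℕ∞) P) (hΔ : ∀ z, laplacian P z = g z)
    (h1 : ∀ z : ℂ, ‖fderiv ℝ P z‖ ≤ A₁ * ‖z‖) (h2 : ∀ z, ‖iteratedFDeriv ℝ 2 P z‖ ≤ A₂)
    {r : ℝ} (hr : 1 ≤ r) :
    ‖∫ η in {η : ℂ | 1 ≤ ‖η‖ ∧ ‖η‖ ≤ r}, (g η : ℂ) / η ^ 2‖ ≤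
      (12 * A₁ + 8 * M) * ∫ η, density η := by
  have hM0 : 0 ≤ M := (norm_nonneg _).trans (hM 0)
  have hA1 : 0 ≤ A₁ := by simpa using (norm_nonneg _).trans (h1 1)
  have hA2 : 0 ≤ A₂ := (norm_nonneg _).trans (h2 0)
  have hR : 1 ≤ r ^ 2 := one_le_pow₀ hr
  have hR0 : 0 < r ^ 2 := by linarith
  set φ := truncKernel (r ^ 2) with hφ
  set u := wirtinger P with hu
  have dφ : Differentiable ℝ φ := fun z => (hasFDerivAt_truncKernel hR z).1
  have du : Differentiable ℝ u := fun z => (fderiv_wirtinger hP z).1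
  have hule : ∀ z, ‖u z‖ ≤ 2 * A₁ * ‖z‖ := fun z =>
    (norm_wirtinger_le P z).trans (by linarith [h1 z])
  have hu'le : ∀ z v : ℂ, ‖fderiv ℝ u z v‖ ≤ 2 * A₂ * ‖v‖ := fun z v =>
    (norm_fderiv_wirtinger_le hP z v).trans
      (mul_le_mul_of_nonneg_right (by linarith [h2 z]) (norm_nonneg v))
  have hφle : ∀ z, ‖φ z‖ ≤ r ^ 2 * density z := fun z =>
    (norm_truncKernel_le hR z).trans
      (mul_le_mul_of_nonneg_left (sq_norm_mul_bump_le z) hR0.le)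
  have iφ : Integrable φ := (integrable_density.const_mul (r ^ 2)).mono'
    dφ.continuous.aestronglyMeasurable (Filter.Eventually.of_forall hφle)
  have i1 : ∀ v : ℂ, Integrable fun z => fderiv ℝ φ z v * u z := fun v => by
    refine (integrable_density.const_mul (16 * A₁ * r ^ 2 * ‖v‖)).mono'
      ((measurable_fderiv_apply_const ℝ φ v).mul
        du.continuous.measurable).aestronglyMeasurable (Filter.Eventually.of_forall fun z => ?_)
    rw [norm_mul]
    have hb := bump_pos z
    calc ‖fderiv ℝ φ z v‖ * ‖u z‖
        ≤ 8 * r ^ 2 * (‖z‖ * bump z) * ‖v‖ * (2 * A₁ * ‖z‖) :=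
          mul_le_mul (norm_fderiv_truncKernel_le hR z v) (hule z) (norm_nonneg _) (by positivity)
      _ = 16 * A₁ * r ^ 2 * ‖v‖ * (‖z‖ ^ 2 * bump z) := by ring
      _ ≤ 16 * A₁ * r ^ 2 * ‖v‖ * density z :=
          mul_le_mul_of_nonneg_left (sq_norm_mul_bump_le z) (by positivity)
  have i2 : ∀ v : ℂ, Integrable fun z => φ z * fderiv ℝ u z v := fun v =>
    iφ.mul_bdd (c := 2 * A₂ * ‖v‖) (measurable_fderiv_apply_const ℝ u v).aestronglyMeasurable
      (Filter.Eventually.of_forall fun z => hu'le z v)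
  have i3 : Integrable fun z => φ z * u z := by
    refine (integrable_weight.const_mul (2 * A₁ * r ^ 2)).mono'
      (dφ.continuous.mul du.continuous).aestronglyMeasurable
      (Filter.Eventually.of_forall fun z => ?_)
    rw [norm_mul]
    have hb := bump_pos z
    calc ‖φ z‖ * ‖u z‖ ≤ r ^ 2 * (‖z‖ ^ 2 * bump z) * (2 * A₁ * ‖z‖) :=
          mul_le_mul (norm_truncKernel_le hR z) (hule z) (norm_nonneg _) (by positivity)
      _ = 2 * A₁ * r ^ 2 * (‖z‖ ^ 3 * bump z) := by ring
      _ ≤ 2 * A₁ * r ^ 2 * weight z :=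
          mul_le_mul_of_nonneg_left (norm_pow_three_mul_bump_le z) (by positivity)
  have ibp : ∀ v : ℂ, ∫ z, φ z * fderiv ℝ u z v = -∫ z, fderiv ℝ φ z v * u z := fun v =>
    integral_mul_fderiv_eq_neg_fderiv_mul_of_integrable (i1 v) (i2 v) i3
      (fun z _ => dφ z) fun z _ => du z
  have hmain : ∫ z, (g z : ℂ) * φ z =
      -∫ z, (fderiv ℝ φ z 1 + I * fderiv ℝ φ z I) * u z := by
    have e1 : ∀ z, (g z : ℂ) * φ z = φ z * fderiv ℝ u z 1 + I * (φ z * fderiv ℝ u z I) :=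
      fun z => by
      rw [← hΔ z, ← fderiv_wirtinger_add hP z]; ring
    have e2 : ∀ z, (fderiv ℝ φ z 1 + I * fderiv ℝ φ z I) * u z =
        fderiv ℝ φ z 1 * u z + I * (fderiv ℝ φ z I * u z) := fun z => by ring
    simp only [e1, e2]
    rw [integral_add (i2 1) ((i2 I).const_mul I), integral_add (i1 1) ((i1 I).const_mul I),
      integral_const_mul, integral_const_mul, ibp, ibp]
    ring
  have isd := integrable_scaledDensity hr
  have hφg : ‖∫ z, (g z : ℂ) * φ z‖ ≤ 12 * A₁ * ∫ η, density η := by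
    rw [hmain, norm_neg]
    have hint : Integrable fun z => 4 * A₁ * (2 * density z + scaledDensity r z) :=
      ((integrable_density.const_mul 2).add isd).const_mul _
    refine (norm_integral_le_of_norm_le hint (Filter.Eventually.of_forall fun z => ?_)).trans
      (le_of_eq ?_)
    · rw [norm_mul]
      have h3 := norm_fderiv_truncKernel_add_le hr z
      calc ‖fderiv ℝ φ z 1 + I * fderiv ℝ φ z I‖ * ‖u z‖
          ≤ ‖fderiv ℝ φ z 1 + I * fderiv ℝ φ z I‖ * (2 * A₁ * ‖z‖) :=
            mul_le_mul_of_nonneg_left (hule z) (norm_nonneg _)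
        _ = 2 * A₁ * (‖fderiv ℝ φ z 1 + I * fderiv ℝ φ z I‖ * ‖z‖) := by ring
        _ ≤ 2 * A₁ * (2 * (2 * density z + scaledDensity r z)) :=
            mul_le_mul_of_nonneg_left h3 (by positivity)
        _ = _ := by ring
    · rw [integral_const_mul, integral_add (integrable_density.const_mul 2) isd,
        integral_const_mul, integral_scaledDensity hr]
      ring
  have hmb : MeasurableSet (Metric.closedBall (0 : ℂ) r) := Metric.isClosed_closedBall.measurableSet
  have hcut : Integrable fun z =>
      (g z : ℂ) * (Metric.closedBall (0 : ℂ) r).indicator cutKernel z := by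
    have := (integrable_indicator_iff hmb).2 (integrableOn_cutKernel hg hM
      measure_closedBall_lt_top.ne id measurable_id)
    refine this.congr (Filter.Eventually.of_forall fun z => ?_)
    simp [Set.indicator]
  have hgφ : Integrable fun z => (g z : ℂ) * φ z :=
    iφ.bdd_mul (c := M) (continuous_ofReal.comp hg).aestronglyMeasurable
      (Filter.Eventually.of_forall fun z => by simpa using hM z)
  have he : ∫ η in {η : ℂ | 1 ≤ ‖η‖ ∧ ‖η‖ ≤ r}, (g η : ℂ) / η ^ 2 =
      ∫ z, (g z : ℂ) * (Metric.closedBall (0 : ℂ) r).indicator cutKernel z := by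
    have := annulus_integral_eq g 0 r
    simp only [zero_add] at this
    rw [this, ← integral_indicator hmb]
    congr 1 with z
    simp [Set.indicator]
  have hdiff : ‖(∫ z, (g z : ℂ) * (Metric.closedBall (0 : ℂ) r).indicator cutKernel z) -
      ∫ z, (g z : ℂ) * φ z‖ ≤ 8 * M * ∫ η, density η := by
    rw [← integral_sub hcut hgφ]
    have hint : Integrable fun z => M * (4 * density z + 4 * scaledDensity r z) :=
      ((integrable_density.const_mul 4).add (isd.const_mul 4)).const_mul _
    refine (norm_integral_le_of_norm_le hint (Filter.Eventually.of_forall fun z => ?_)).trans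
      (le_of_eq ?_)
    · rw [← mul_sub, norm_mul, norm_real]
      exact mul_le_mul (hM z) (norm_indicator_cutKernel_sub_truncKernel_le hr z) (norm_nonneg _) hM0
    · rw [integral_const_mul, integral_add (integrable_density.const_mul 4) (isd.const_mul 4),
        integral_const_mul, integral_const_mul, integral_scaledDensity hr]
      ring
  rw [he]
  refine (norm_le_norm_add_norm_sub' _ _).trans ((add_le_add hφg hdiff).trans (le_of_eq ?_))
  ring

end PotentialTheory

/-- Proposition 1.2: for a non-negative smooth `h : ℂ → ℝ` with all `C^k` norms finite,
condition (H3) (uniform boundedness of the annulus integrals of `h(ζ+η)/η²`) is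
equivalent to the existence of a nice family of subharmonic potentials. -/
theorem statement0 (h : ℂ → ℝ) (hsmooth : ContDiff ℝ (⊤ : ℕ∞) h)
    (hnonneg : ∀ z, 0 ≤ h z)
    (hCk : ∀ k : ℕ, ∃ M : ℝ, ∀ z : ℂ, ‖iteratedFDeriv ℝ k h z‖ ≤ M) :
    (∃ A₀ : ℝ, ∀ ζ : ℂ, ∀ r : ℝ, 1 ≤ r →
        ‖∫ η in {η : ℂ | 1 ≤ ‖η‖ ∧ ‖η‖ ≤ r}, (h (ζ + η) : ℂ) / η ^ 2‖ ≤ A₀) ↔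
    (∃ A : ℕ → ℝ, ∀ ζ : ℂ, ∃ P : ℂ → ℝ, ContDiff ℝ (⊤ : ℕ∞) P ∧ P 0 = 0 ∧
        (∀ z, laplacian P z = h (ζ + z)) ∧
        (∀ z : ℂ, ‖fderiv ℝ P z‖ ≤ A 1 * ‖z‖) ∧
        (∀ k : ℕ, 2 ≤ k → ∀ z : ℂ, ‖iteratedFDeriv ℝ k P z‖ ≤ A k)) := by
  choose M hM using hCk
  have hh : BoundedSmooth h M := ⟨hsmooth, hM⟩
  constructor
  · rintro ⟨A₀, hA⟩
    exact exists_potential_of_annulus_bound hh hA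
  · rintro ⟨A, hA⟩
    refine ⟨(12 * A 1 + 8 * M 0) * ∫ η, density η, fun ζ r hr => ?_⟩
    obtain ⟨P, hP, -, hΔ, h1, h2⟩ := hA ζ
    have hg := hh.comp_const_add ζ
    exact norm_annulus_integral_le_of_potential hg.1.continuous hg.norm_le hP hΔ h1
      (h2 2 le_rfl) hr
end

section
/- Let h : ℂ → [0,∞) be smooth with ‖h‖_{C^k(ℂ)} < ∞ for every k, and suppose h(z) = h(Re z) for all z ∈ ℂ (i.e. h(x+iy) depends only on x). Then sup_{z∈ℂ} sup_{r∈[1,∞)} | ∫_{1≤|η|≤r} h(z+η)/η² dm(η) | < ∞. -/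
open MeasureTheory Complex

/-- The antiderivative `v ↦ i / (u + iv)` bounds the integral of `1 / (u + iv)²` over a vertical
segment that avoids the origin. -/
lemma norm_integral_vertical_segment_le (u a b : ℝ) (hab : a ≤ b)
    (h0 : ∀ v ∈ Set.Icc a b, (⟨u, v⟩ : ℂ) ≠ 0) :
    ‖∫ v in Set.Icc a b, 1 / (⟨u, v⟩ : ℂ) ^ 2‖ ≤ 1 / ‖(⟨u, a⟩ : ℂ)‖ + 1 / ‖(⟨u, b⟩ : ℂ)‖ := by
  have hmk : ∀ v : ℝ, (⟨u, v⟩ : ℂ) = u + v * I := fun v => Complex.mk_eq_add_mul_I u v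
  have hcont : Continuous fun v : ℝ => (⟨u, v⟩ : ℂ) := by
    simp only [hmk]; fun_prop
  have hderiv : ∀ v ∈ Set.uIcc a b,
      HasDerivAt (fun v : ℝ => I / (⟨u, v⟩ : ℂ)) (1 / (⟨u, v⟩ : ℂ) ^ 2) v := by
    intro v hv
    rw [Set.uIcc_of_le hab] at hv
    have hne := h0 v hv
    have hline : HasDerivAt (fun v : ℝ => (⟨u, v⟩ : ℂ)) I v := by
      simp only [hmk]
      simpa using ((hasDerivAt_id v).ofReal_comp.mul_const I).const_add (u : ℂ)
    refine ((hasDerivAt_const v I).div hline hne).congr_deriv ?_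
    simp
  have hint : IntervalIntegrable (fun v : ℝ => 1 / (⟨u, v⟩ : ℂ) ^ 2) volume a b := by
    apply ContinuousOn.intervalIntegrable
    rw [Set.uIcc_of_le hab]
    exact continuousOn_const.div (hcont.pow 2).continuousOn fun v hv => pow_ne_zero 2 (h0 v hv)
  rw [integral_Icc_eq_integral_Ioc, ← intervalIntegral.integral_of_le hab,
    intervalIntegral.integral_eq_sub_of_hasDerivAt hderiv hint]
  refine (norm_sub_le _ _).trans ?_
  rw [norm_div, norm_div, norm_I, add_comm]

lemma norm_mk_sqrt {u s : ℝ} (hs : 0 ≤ s) (hus : u ^ 2 ≤ s ^ 2) :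
    ‖(⟨u, √(s ^ 2 - u ^ 2)⟩ : ℂ)‖ = s ∧ ‖(⟨u, -√(s ^ 2 - u ^ 2)⟩ : ℂ)‖ = s := by
  have hsq : √(s ^ 2 - u ^ 2) * √(s ^ 2 - u ^ 2) = s ^ 2 - u ^ 2 :=
    Real.mul_self_sqrt (by linarith)
  constructor <;> rw [Complex.norm_def, Complex.normSq_mk] <;>
    rw [Real.sqrt_eq_iff_mul_self_eq (by nlinarith) hs] <;> nlinarith

/-- The integral of `1 / η²` over the intersection of the annulus `1 ≤ |η| ≤ r` with the vertical
line `Re η = u`. -/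
lemma norm_integral_annulus_slice_le (u r : ℝ) (hr : 1 ≤ r) :
    ‖∫ v in {v : ℝ | 1 ≤ ‖(⟨u, v⟩ : ℂ)‖ ∧ ‖(⟨u, v⟩ : ℂ)‖ ≤ r}, 1 / (⟨u, v⟩ : ℂ) ^ 2‖ ≤
      (Set.Icc (-r) r).indicator (fun _ => 2 / r) u +
        (Set.Icc (-1) 1).indicator (fun _ => 2) u := by
  have hr0 : 0 < r := by linarith
  have hslice : {v : ℝ | 1 ≤ ‖(⟨u, v⟩ : ℂ)‖ ∧ ‖(⟨u, v⟩ : ℂ)‖ ≤ r} =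
      {v : ℝ | 1 ≤ u ^ 2 + v ^ 2 ∧ u ^ 2 + v ^ 2 ≤ r ^ 2} := by
    ext v
    have hn : ‖(⟨u, v⟩ : ℂ)‖ = √(u ^ 2 + v ^ 2) := by
      rw [Complex.norm_def, Complex.normSq_mk]; ring_nf
    simp only [Set.mem_ofPred_eq, hn, Real.one_le_sqrt, Real.sqrt_le_left hr0.le]
  rw [hslice]
  have hind : 0 ≤ (Set.Icc (-1 : ℝ) 1).indicator (fun _ => (2 : ℝ)) u :=
    Set.indicator_nonneg (fun _ _ => by norm_num) u
  by_cases hur : u ^ 2 ≤ r ^ 2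
  · have hmem : u ∈ Set.Icc (-r) r := abs_le.mp (abs_le_of_sq_le_sq hur hr0.le)
    rw [Set.indicator_of_mem hmem]
    obtain ⟨hpos, hneg⟩ := norm_mk_sqrt hr0.le hur
    have hV := Real.sq_sqrt (sub_nonneg.mpr hur)
    have hV0 := Real.sqrt_nonneg (r ^ 2 - u ^ 2)
    set V := √(r ^ 2 - u ^ 2)
    by_cases hu1 : u ^ 2 < 1
    · have hmem1 : u ∈ Set.Icc (-1 : ℝ) 1 := abs_le.mp ((sq_le_one_iff_abs_le_one u).mp hu1.le)
      rw [Set.indicator_of_mem hmem1]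
      have hu1' : u ^ 2 ≤ 1 ^ 2 := by linarith
      obtain ⟨hpos1, hneg1⟩ := norm_mk_sqrt zero_le_one hu1'
      have hW := Real.sq_sqrt (sub_nonneg.mpr hu1')
      have hW0 : 0 < √(1 ^ 2 - u ^ 2) := Real.sqrt_pos.mpr (by linarith)
      set W := √(1 ^ 2 - u ^ 2)
      have hWV : W ≤ V := by nlinarith
      have hset : {v : ℝ | 1 ≤ u ^ 2 + v ^ 2 ∧ u ^ 2 + v ^ 2 ≤ r ^ 2} =
          Set.Icc (-V) (-W) ∪ Set.Icc W V := by
        ext v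
        simp only [Set.mem_ofPred_eq, Set.mem_union, Set.mem_Icc]
        constructor
        · rintro ⟨h1, h2⟩
          have hvV : |v| ≤ V := abs_le_of_sq_le_sq (by linarith) hV0
          have hvW : W ≤ |v| := by
            rw [← abs_of_pos hW0]; exact sq_le_sq.mp (by linarith)
          rw [abs_le] at hvV
          rcases le_abs.mp hvW with h | h
          · exact Or.inr ⟨h, hvV.2⟩
          · exact Or.inl ⟨hvV.1, by linarith⟩
        · rintro (⟨h1, h2⟩ | ⟨h1, h2⟩) <;> constructor <;> nlinarith
      have hne : ∀ v : ℝ, v ≠ 0 → (⟨u, v⟩ : ℂ) ≠ 0 := fun v hv h => hv (congrArg Complex.im h)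
      have hne1 : ∀ v ∈ Set.Icc (-V) (-W), (⟨u, v⟩ : ℂ) ≠ 0 := fun v hv =>
        hne v (by have := hv.2; linarith)
      have hne2 : ∀ v ∈ Set.Icc W V, (⟨u, v⟩ : ℂ) ≠ 0 := fun v hv =>
        hne v (by have := hv.1; linarith)
      have hcont : Continuous fun v : ℝ => (⟨u, v⟩ : ℂ) := by
        simp only [Complex.mk_eq_add_mul_I]; fun_prop
      have hint : ∀ a b : ℝ, (∀ v ∈ Set.Icc a b, (⟨u, v⟩ : ℂ) ≠ 0) →
          IntegrableOn (fun v : ℝ => 1 / (⟨u, v⟩ : ℂ) ^ 2) (Set.Icc a b) := fun a b hab =>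
        (continuousOn_const.div (hcont.pow 2).continuousOn
          fun v hv => pow_ne_zero 2 (hab v hv)).integrableOn_Icc
      have hdisj : Disjoint (Set.Icc (-V) (-W)) (Set.Icc W V) :=
        Set.disjoint_left.mpr fun v h1 h2 => by linarith [h1.2, h2.1]
      rw [hset, setIntegral_union hdisj measurableSet_Icc (hint _ _ hne1) (hint _ _ hne2)]
      have b1 := norm_integral_vertical_segment_le u (-V) (-W) (by linarith) hne1
      have b2 := norm_integral_vertical_segment_le u W V hWV hne2
      rw [hneg, hneg1] at b1
      rw [hpos, hpos1] at b2
      refine (norm_add_le _ _).trans ((add_le_add b1 b2).trans (le_of_eq ?_))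
      ring
    · have hset : {v : ℝ | 1 ≤ u ^ 2 + v ^ 2 ∧ u ^ 2 + v ^ 2 ≤ r ^ 2} = Set.Icc (-V) V := by
        ext v
        simp only [Set.mem_ofPred_eq, Set.mem_Icc]
        constructor
        · rintro ⟨-, h2⟩
          exact abs_le.mp (abs_le_of_sq_le_sq (by linarith) hV0)
        · rintro ⟨h1, h2⟩
          constructor <;> nlinarith
      have hu0 : u ≠ 0 := by rintro rfl; simp at hu1
      have b := norm_integral_vertical_segment_le u (-V) V (by linarith)
        fun v _ h => hu0 (congrArg Complex.re h)
      rw [hneg, hpos] at b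
      rw [hset]
      refine b.trans ?_
      have : 1 / r + 1 / r = 2 / r := by ring
      linarith
  · have hset : {v : ℝ | 1 ≤ u ^ 2 + v ^ 2 ∧ u ^ 2 + v ^ 2 ≤ r ^ 2} = ∅ := by
      ext v
      simp only [Set.mem_ofPred_eq, Set.mem_empty_iff_false, iff_false]
      rintro ⟨-, h2⟩
      nlinarith
    rw [hset]
    simp only [setIntegral_empty, norm_zero]
    exact add_nonneg (Set.indicator_nonneg (fun _ _ => by positivity) u) hind

/-- Proposition 1.3(a): if `h : ℂ → [0,∞)` is smooth with all `C^k` norms finite and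
depends only on `Re z` (a tube domain), then the annulus integrals
`∫_{1≤|η|≤r} h(z+η)/η² dm(η)` are uniformly bounded in `z` and `r ≥ 1`. -/
theorem statement1 (h : ℂ → ℝ) (hsmooth : ContDiff ℝ (⊤ : ℕ∞) h)
    (hnonneg : ∀ z, 0 ≤ h z)
    (hCk : ∀ k : ℕ, ∃ M : ℝ, ∀ z : ℂ, ‖iteratedFDeriv ℝ k h z‖ ≤ M)
    (htube : ∀ z : ℂ, h z = h (z.re : ℂ)) :
    ∃ A₀ : ℝ, ∀ z : ℂ, ∀ r : ℝ, 1 ≤ r →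
      ‖∫ η in {η : ℂ | 1 ≤ ‖η‖ ∧ ‖η‖ ≤ r}, (h (z + η) : ℂ) / η ^ 2‖ ≤ A₀ := by
  obtain ⟨M, hM⟩ := hCk 0
  simp only [norm_iteratedFDeriv_zero] at hM
  have hcont : Continuous h := hsmooth.continuous
  have hM0 : 0 ≤ M := (norm_nonneg _).trans (hM 0)
  refine ⟨8 * M, fun z r hr => ?_⟩
  have hr0 : 0 < r := by linarith
  set S : Set ℂ := {η : ℂ | 1 ≤ ‖η‖ ∧ ‖η‖ ≤ r} with hS
  have hSclosed : IsClosed S :=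
    (isClosed_le continuous_const continuous_norm).inter
      (isClosed_le continuous_norm continuous_const)
  have hScompact : IsCompact S :=
    (isCompact_closedBall (0 : ℂ) r).of_isClosed_subset hSclosed fun η hη => by
      simpa using hη.2
  have hSmeas : MeasurableSet S := hSclosed.measurableSet
  have hne : ∀ η ∈ S, η ^ 2 ≠ 0 := fun η hη =>
    pow_ne_zero 2 (norm_pos_iff.mp (lt_of_lt_of_le one_pos hη.1))
  have hint : IntegrableOn (fun η : ℂ => (h (z + η) : ℂ) / η ^ 2) S := by
    refine ContinuousOn.integrableOn_compact hScompact
      (ContinuousOn.div (Continuous.continuousOn ?_) (continuous_pow 2).continuousOn hne)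
    fun_prop
  have hmp := Complex.volume_preserving_equiv_real_prod.symm
  have hint' := (hmp.integrable_comp_emb (MeasurableEquiv.measurableEmbedding _)).mpr
    ((integrable_indicator_iff hSmeas).mpr hint)
  simp only [Function.comp_def] at hint'
  rw [← integral_indicator hSmeas,
    ← hmp.integral_comp (MeasurableEquiv.measurableEmbedding _),
    Measure.volume_eq_prod, integral_prod _ hint']
  have hslice : ∀ u : ℝ, ‖∫ v : ℝ, S.indicator (fun η : ℂ => (h (z + η) : ℂ) / η ^ 2)
      (Complex.measurableEquivRealProd.symm (u, v))‖ ≤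
      M * ((Set.Icc (-r) r).indicator (fun _ => 2 / r) u +
        (Set.Icc (-1) 1).indicator (fun _ => 2) u) := by
    intro u
    have hTmeas : MeasurableSet {v : ℝ | 1 ≤ ‖(⟨u, v⟩ : ℂ)‖ ∧ ‖(⟨u, v⟩ : ℂ)‖ ≤ r} := by
      have hline : Continuous fun v : ℝ => (⟨u, v⟩ : ℂ) := by
        simp only [Complex.mk_eq_add_mul_I]; fun_prop
      exact hSmeas.preimage hline.measurable
    have hfun : (fun v : ℝ => S.indicator (fun η : ℂ => (h (z + η) : ℂ) / η ^ 2)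
        (Complex.measurableEquivRealProd.symm (u, v))) =
        {v : ℝ | 1 ≤ ‖(⟨u, v⟩ : ℂ)‖ ∧ ‖(⟨u, v⟩ : ℂ)‖ ≤ r}.indicator
          fun v => (h ((z.re + u : ℝ) : ℂ) : ℂ) * (1 / (⟨u, v⟩ : ℂ) ^ 2) := by
      ext v
      have hval : h (z + ⟨u, v⟩) = h ((z.re + u : ℝ) : ℂ) := by
        rw [htube, Complex.add_re]
      change S.indicator (fun η : ℂ => (h (z + η) : ℂ) / η ^ 2) ⟨u, v⟩ = _
      simp only [Set.indicator_apply, hS, Set.mem_ofPred_eq, hval, mul_one_div]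
    rw [hfun, integral_indicator hTmeas, integral_const_mul, norm_mul, Complex.norm_real]
    exact mul_le_mul (hM _) (norm_integral_annulus_slice_le u r hr) (norm_nonneg _) hM0
  have hI : ∀ a c : ℝ, Integrable ((Set.Icc (-a) a).indicator fun _ : ℝ => c) := fun a c =>
    (integrable_indicator_iff measurableSet_Icc).mpr
      (integrableOn_const (by simp))
  refine (norm_integral_le_of_norm_le (((hI r (2 / r)).add (hI 1 2)).const_mul M)
    (Filter.Eventually.of_forall hslice)).trans (le_of_eq ?_)
  have hval : ∀ a c : ℝ, 0 ≤ a →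
      ∫ u : ℝ, (Set.Icc (-a) a).indicator (fun _ => c) u = 2 * a * c := by
    intro a c ha
    rw [integral_indicator measurableSet_Icc, setIntegral_const, Real.volume_real_Icc_of_le
      (by linarith), smul_eq_mul]
    ring
  simp only [Pi.add_apply]
  rw [integral_const_mul, integral_add (hI r (2 / r)) (hI 1 2), hval r _ hr0.le,
    hval 1 2 zero_le_one]
  field_simp
  ring
end

section
/- Let h : ℂ → [0,∞) be smooth with ‖h‖_{C^k(ℂ)} < ∞ for every k. Suppose there exist constants A ≥ 0, B > 0 and C > 0 such that ∫_{|η|≤r} |h(η+z) − A| dm(η) ≤ B r^{2−C} for all z ∈ ℂ and all r ≥ 1. Then there is a constant K, depending only on B and C, such that | ∫_{1≤|η|≤r} h(z+η)/η² dm(η) | ≤ K for all z ∈ ℂ and all r ∈ [1,∞). -/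
open MeasureTheory Complex

/-- The kernel `1 / η²` has mean zero on every centred annulus. -/
lemma setIntegral_annulus_const_div_sq (a : ℂ) (r : ℝ) :
    ∫ η in {η : ℂ | 1 ≤ ‖η‖ ∧ ‖η‖ ≤ r}, a / η ^ 2 = 0 := by
  let e : ℂ ≃ₗᵢ[ℝ] ℂ := rotation ⟨I, by simp [Submonoid.unitSphere]⟩
  have he : ∀ η, e η = I * η := fun η => rotation_apply _ η
  have hpre := e.measurePreserving.setIntegral_preimage_emb
    e.toHomeomorph.measurableEmbedding (fun η : ℂ => a / η ^ 2)
    {η : ℂ | 1 ≤ ‖η‖ ∧ ‖η‖ ≤ r}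
  have hset : e ⁻¹' {η : ℂ | 1 ≤ ‖η‖ ∧ ‖η‖ ≤ r} = {η : ℂ | 1 ≤ ‖η‖ ∧ ‖η‖ ≤ r} := by
    ext η
    simp
  rw [hset] at hpre
  have hneg : ∀ η : ℂ, a / (e η) ^ 2 = -(a / η ^ 2) := fun η => by
    rw [he, mul_pow, I_sq, neg_one_mul, div_neg]
  simp only [hneg, integral_neg] at hpre
  exact self_eq_neg.mp hpre.symm

/-- A quotient of continuous functions whose denominator vanishes only inside the unit disc is
integrable on subsets of a centred annulus. -/
lemma integrableOn_div_of_subset_annulus {𝕜 : Type*} [RCLike 𝕜] {f d : ℂ → 𝕜} (hf : Continuous f)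
    (hd : Continuous d) (hd0 : ∀ η, 1 ≤ ‖η‖ → d η ≠ 0) (R : ℝ) {s : Set ℂ}
    (hs : s ⊆ {η : ℂ | 1 ≤ ‖η‖ ∧ ‖η‖ ≤ R}) :
    IntegrableOn (fun η => f η / d η) s := by
  have hcompact : IsCompact {η : ℂ | 1 ≤ ‖η‖ ∧ ‖η‖ ≤ R} := by
    refine (isCompact_closedBall (0 : ℂ) R).of_isClosed_subset ?_ fun η hη => by simpa using hη.2
    exact (isClosed_le continuous_const continuous_norm).inter
      (isClosed_le continuous_norm continuous_const)
  refine IntegrableOn.mono_set (ContinuousOn.integrableOn_compact hcompact ?_) hs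
  exact hf.continuousOn.div hd.continuousOn fun η hη => hd0 η hη.1

/-- Dyadic summation: growth of order `r ^ (2 - C)` of the integrals of `g` over discs bounds
the integrals of `g / |η|²` by a geometric sum. -/
lemma setIntegral_div_norm_sq_le_geom_sum {g : ℂ → ℝ} (hg : Continuous g) (hg0 : ∀ η, 0 ≤ g η)
    {B C : ℝ} (hgrowth : ∀ r : ℝ, 1 ≤ r → ∫ η in {η : ℂ | ‖η‖ ≤ r}, g η ≤ B * r ^ (2 - C))
    (n : ℕ) :
    ∫ η in {η : ℂ | 1 ≤ ‖η‖ ∧ ‖η‖ < 2 ^ n}, g η / ‖η‖ ^ 2 ≤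
      B * 2 ^ (2 - C) * ∑ k ∈ Finset.range n, ((2 : ℝ) ^ (-C)) ^ k := by
  induction n with
  | zero =>
    have hempty : {η : ℂ | 1 ≤ ‖η‖ ∧ ‖η‖ < 2 ^ 0} = ∅ := by
      ext η
      simp
    rw [hempty]
    simp
  | succ n ih =>
    have hpow : (1 : ℝ) ≤ 2 ^ n := one_le_pow₀ one_le_two
    have hpow' : (2 : ℝ) ^ n ≤ 2 ^ (n + 1) := pow_le_pow_right₀ one_le_two n.le_succ
    set T : Set ℂ := {η : ℂ | 2 ^ n ≤ ‖η‖ ∧ ‖η‖ < 2 ^ (n + 1)} with hT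
    have hTm : MeasurableSet T :=
      (measurableSet_le measurable_const measurable_norm).inter
        (measurableSet_lt measurable_norm measurable_const)
    have hunion : {η : ℂ | 1 ≤ ‖η‖ ∧ ‖η‖ < 2 ^ (n + 1)} =
        {η : ℂ | 1 ≤ ‖η‖ ∧ ‖η‖ < 2 ^ n} ∪ T := by
      ext η
      simp only [hT, Set.mem_ofPred_eq, Set.mem_union]
      constructor
      · rintro ⟨h1, h2⟩
        rcases lt_or_ge ‖η‖ (2 ^ n) with h | h
        · exact Or.inl ⟨h1, h⟩
        · exact Or.inr ⟨h, h2⟩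
      · rintro (⟨h1, h2⟩ | ⟨h1, h2⟩)
        · exact ⟨h1, h2.trans_le hpow'⟩
        · exact ⟨hpow.trans h1, h2⟩
    have hdisj : Disjoint {η : ℂ | 1 ≤ ‖η‖ ∧ ‖η‖ < 2 ^ n} T :=
      Set.disjoint_left.mpr fun η h1 h2 => absurd h1.2 (not_lt.mpr h2.1)
    have hd0 : ∀ η : ℂ, 1 ≤ ‖η‖ → ‖η‖ ^ 2 ≠ 0 := fun η hη => by positivity
    have hintT : IntegrableOn (fun η => g η / ‖η‖ ^ 2) T :=
      integrableOn_div_of_subset_annulus hg (by fun_prop) hd0 (2 ^ (n + 1))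
        fun η hη => ⟨hpow.trans hη.1, hη.2.le⟩
    have hball : IntegrableOn g {η : ℂ | ‖η‖ ≤ 2 ^ (n + 1)} := by
      refine (hg.continuousOn.integrableOn_compact
        (isCompact_closedBall (0 : ℂ) (2 ^ (n + 1)))).mono_set fun η hη => by simpa using hη
    have hTball : T ⊆ {η : ℂ | ‖η‖ ≤ 2 ^ (n + 1)} := fun η hη => hη.2.le
    have hshell : ∫ η in T, g η / ‖η‖ ^ 2 ≤ B * 2 ^ (2 - C) * ((2 : ℝ) ^ (-C)) ^ n := by
      calc ∫ η in T, g η / ‖η‖ ^ 2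
          ≤ ∫ η in T, g η / (2 ^ n) ^ 2 := by
            refine setIntegral_mono_on hintT ((hball.mono_set hTball).div_const _) hTm
              fun η hη => ?_
            have := hg0 η
            have := hη.1
            gcongr
        _ = (∫ η in T, g η) / (2 ^ n) ^ 2 := integral_div _ _
        _ ≤ (∫ η in {η : ℂ | ‖η‖ ≤ 2 ^ (n + 1)}, g η) / (2 ^ n) ^ 2 := by
            refine div_le_div_of_nonneg_right ?_ (by positivity)
            exact setIntegral_mono_set hball (ae_of_all _ hg0) hTball.eventuallyLE
        _ ≤ B * ((2 : ℝ) ^ (n + 1)) ^ (2 - C) / (2 ^ n) ^ 2 := by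
            gcongr
            exact hgrowth _ (hpow.trans hpow')
        _ = B * 2 ^ (2 - C) * ((2 : ℝ) ^ (-C)) ^ n := by
            have h2 : (0 : ℝ) < 2 := two_pos
            have hexp : ((2 : ℝ) ^ (n + 1)) ^ (2 - C) =
                2 ^ (2 - C) * ((2 : ℝ) ^ (-C)) ^ n * (2 ^ n) ^ 2 := by
              simp only [← Real.rpow_natCast, ← Real.rpow_mul h2.le, ← Real.rpow_add h2]
              congr 1
              push_cast
              ring
            rw [hexp]
            field_simp
    rw [hunion, setIntegral_union hdisj hTm
      (integrableOn_div_of_subset_annulus hg (by fun_prop) hd0 (2 ^ n)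
        fun η hη => ⟨hη.1, hη.2.le⟩) hintT, Finset.sum_range_succ, mul_add]
    exact add_le_add ih hshell

/-- Proposition 1.3(b): if `h : ℂ → [0,∞)` is smooth with all `C^k` norms finite
and is well approximated on large scales by a constant `A` in the sense that
`∫_{|η|≤r} |h(η+z) − A| dm(η) ≤ B r^{2−C}` for all `z` and `r ≥ 1`, then the annulus
integrals `∫_{1≤|η|≤r} h(z+η)/η² dm(η)` are bounded by a constant `K = K(B,C)`. -/
theorem statement2 (B C : ℝ) (hB : 0 < B) (hC : 0 < C) :
    ∃ K : ℝ, ∀ h : ℂ → ℝ, ContDiff ℝ (⊤ : ℕ∞) h → (∀ z, 0 ≤ h z) →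
      (∀ k : ℕ, ∃ M : ℝ, ∀ z : ℂ, ‖iteratedFDeriv ℝ k h z‖ ≤ M) →
      ∀ A : ℝ, 0 ≤ A →
      (∀ z : ℂ, ∀ r : ℝ, 1 ≤ r →
        (∫ η in {η : ℂ | ‖η‖ ≤ r}, |h (η + z) - A|) ≤ B * r ^ (2 - C)) →
      ∀ z : ℂ, ∀ r : ℝ, 1 ≤ r →
        ‖∫ η in {η : ℂ | 1 ≤ ‖η‖ ∧ ‖η‖ ≤ r}, (h (z + η) : ℂ) / η ^ 2‖ ≤ K := by
  refine ⟨B * 2 ^ (2 - C) * (1 - (2 : ℝ) ^ (-C))⁻¹, ?_⟩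
  intro h hh _ _ A _ hgrowth z r _
  have hcont : Continuous h := hh.continuous
  have hq0 : (0 : ℝ) ≤ 2 ^ (-C) := by positivity
  have hq1 : (2 : ℝ) ^ (-C) < 1 := Real.rpow_lt_one_of_one_lt_of_neg one_lt_two (neg_neg_of_pos hC)
  obtain ⟨n, hn⟩ := pow_unbounded_of_one_lt r (one_lt_two : (1 : ℝ) < 2)
  have hd0 : ∀ η : ℂ, 1 ≤ ‖η‖ → η ^ 2 ≠ 0 := fun η hη =>
    pow_ne_zero 2 (norm_pos_iff.mp (one_pos.trans_le hη))
  have hg : Continuous fun η => |h (η + z) - A| := by fun_prop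
  have hsub : ∫ η in {η : ℂ | 1 ≤ ‖η‖ ∧ ‖η‖ ≤ r}, (h (z + η) : ℂ) / η ^ 2 =
      ∫ η in {η : ℂ | 1 ≤ ‖η‖ ∧ ‖η‖ ≤ r}, ((h (η + z) - A : ℝ) : ℂ) / η ^ 2 := by
    have hdiff := integral_sub
      (integrableOn_div_of_subset_annulus (f := fun η => (h (z + η) : ℂ)) (by fun_prop)
        (continuous_pow 2) hd0 r Set.Subset.rfl)
      (integrableOn_div_of_subset_annulus (f := fun _ => (A : ℂ)) continuous_const
        (continuous_pow 2) hd0 r Set.Subset.rfl)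
    rw [setIntegral_annulus_const_div_sq, sub_zero] at hdiff
    rw [← hdiff]
    congr 1
    ext η
    rw [add_comm η z, ofReal_sub, sub_div]
  rw [hsub]
  calc _ ≤ ∫ η in {η : ℂ | 1 ≤ ‖η‖ ∧ ‖η‖ ≤ r}, ‖((h (η + z) - A : ℝ) : ℂ) / η ^ 2‖ :=
        norm_integral_le_integral_norm _
    _ = ∫ η in {η : ℂ | 1 ≤ ‖η‖ ∧ ‖η‖ ≤ r}, |h (η + z) - A| / ‖η‖ ^ 2 := by
        simp only [norm_div, norm_pow, norm_real, Real.norm_eq_abs]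
    _ ≤ ∫ η in {η : ℂ | 1 ≤ ‖η‖ ∧ ‖η‖ < 2 ^ n}, |h (η + z) - A| / ‖η‖ ^ 2 := by
        have hsubset : {η : ℂ | 1 ≤ ‖η‖ ∧ ‖η‖ ≤ r} ⊆ {η : ℂ | 1 ≤ ‖η‖ ∧ ‖η‖ < 2 ^ n} :=
          fun η hη => ⟨hη.1, hη.2.trans_lt hn⟩
        refine setIntegral_mono_set ?_ (ae_of_all _ fun η => by positivity) hsubset.eventuallyLE
        exact integrableOn_div_of_subset_annulus hg (by fun_prop)
          (fun η hη => by positivity) (2 ^ n) fun η hη => ⟨hη.1, hη.2.le⟩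
    _ ≤ B * 2 ^ (2 - C) * ∑ k ∈ Finset.range n, ((2 : ℝ) ^ (-C)) ^ k :=
        setIntegral_div_norm_sq_le_geom_sum hg (fun _ => abs_nonneg _) (hgrowth z) n
    _ ≤ B * 2 ^ (2 - C) * (1 - (2 : ℝ) ^ (-C))⁻¹ := by
        gcongr
        rw [← tsum_geometric_of_lt_one hq0 hq1]
        exact (summable_geometric_of_lt_one hq0 hq1).sum_le_tsum _ fun _ _ => by positivity
end

section
/- Fix an integer m ≥ 0 and c ∈ (0, 2π). Then there exists C > 0, depending only on m and c, such that for every (A₀,…,A_m) ∈ ℂ^{m+1} with Σ_{k=0}^m |A_k| = 1, the arc-length measure of the set { ν ∈ S¹ : |Σ_{k=0}^m A_k ν^k| ≥ C } is strictly greater than c. -/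
open MeasureTheory Complex Finset

/-- The map `θ ↦ exp (θ * I)` is injective on `[0, 2π)`. -/
theorem injOn_exp_mul_I_Ico :
    Set.InjOn (fun θ : ℝ => Complex.exp ((θ : ℂ) * Complex.I)) (Set.Ico 0 (2 * Real.pi)) := by
  intro x hx y hy hxy
  obtain ⟨n, hn⟩ := Complex.exp_eq_exp_iff_exists_int.1 hxy
  have h : x = y + n * (2 * Real.pi) := by
    have := congrArg Complex.im hn
    simpa using this
  have hpi := Real.pi_pos
  have hn0 : n = 0 := by
    have h1 : (n : ℝ) < 1 := by
      by_contra! h'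
      nlinarith [hx.2, hy.1]
    have h2 : (-1 : ℝ) < n := by
      by_contra! h'
      nlinarith [hx.1, hy.2]
    have h1' : n < 1 := by exact_mod_cast h1
    have h2' : -1 < n := by exact_mod_cast h2
    omega
  simpa [hn0] using h

/-- A nonzero polynomial has finitely many zeros `exp (θ * I)` with `θ ∈ [0, 2π)`. -/
theorem finite_setOf_sum_mul_exp_pow_eq_zero {m : ℕ} {A : Fin m → ℂ} (hA : A ≠ 0) :
    {θ : ℝ | θ ∈ Set.Ico 0 (2 * Real.pi) ∧
      ∑ k : Fin m, A k * Complex.exp ((θ : ℂ) * Complex.I) ^ (k : ℕ) = 0}.Finite := by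
  set P : Polynomial ℂ := ∑ k : Fin m, Polynomial.monomial (k : ℕ) (A k) with hP
  have hcoeff (j : Fin m) : P.coeff j = A j := by
    simp [hP, Polynomial.finsetSum_coeff, Polynomial.coeff_monomial, Fin.val_inj]
  have hP0 : P ≠ 0 := by
    intro h
    exact hA (funext fun j => by simp [← hcoeff j, h])
  refine Set.Finite.of_finite_image (f := fun θ : ℝ => Complex.exp ((θ : ℂ) * Complex.I))
    ((Polynomial.finite_setOfPred_isRoot hP0).subset ?_)
    (injOn_exp_mul_I_Ico.mono fun θ hθ => hθ.1)
  rintro _ ⟨θ, hθ, rfl⟩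
  simpa [hP, Polynomial.IsRoot, Polynomial.eval_finsetSum] using hθ.2

/-- A nonzero polynomial is bounded below on a subset of the circle of measure more than `c`. -/
theorem exists_lt_volume_le_norm_sum_mul_exp_pow {m : ℕ} {A : Fin m → ℂ} (hA : A ≠ 0)
    {c : ℝ} (hc : c < 2 * Real.pi) :
    ∃ C : ℝ, 0 < C ∧ ENNReal.ofReal c < volume {θ : ℝ | θ ∈ Set.Ico 0 (2 * Real.pi) ∧
      C ≤ ‖∑ k : Fin m, A k * Complex.exp ((θ : ℂ) * Complex.I) ^ (k : ℕ)‖} := by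
  set p : ℝ → ℂ := fun θ => ∑ k : Fin m, A k * Complex.exp ((θ : ℂ) * Complex.I) ^ (k : ℕ)
    with hp
  set s : ℕ → Set ℝ :=
    fun n => {θ : ℝ | θ ∈ Set.Ico 0 (2 * Real.pi) ∧ 1 / ((n : ℝ) + 1) ≤ ‖p θ‖} with hs
  have hmono : Monotone s := fun i j hij θ hθ =>
    ⟨hθ.1, (Nat.one_div_le_one_div hij).trans hθ.2⟩
  have hsub : Set.Ico 0 (2 * Real.pi) \ {θ | θ ∈ Set.Ico 0 (2 * Real.pi) ∧ p θ = 0} ⊆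
      ⋃ n, s n := by
    rintro θ ⟨hθ, hne⟩
    have hpos : 0 < ‖p θ‖ := norm_pos_iff.2 fun h => hne ⟨hθ, h⟩
    obtain ⟨n, hn⟩ := exists_nat_one_div_lt hpos
    exact Set.mem_iUnion.2 ⟨n, hθ, hn.le⟩
  have hvol : ENNReal.ofReal c < volume (⋃ n, s n) := by
    refine lt_of_lt_of_le ?_ (measure_mono hsub)
    rw [measure_sdiff_null ((finite_setOf_sum_mul_exp_pow_eq_zero hA).measure_zero volume),
      Real.volume_Ico, sub_zero]
    exact (ENNReal.ofReal_lt_ofReal_iff Real.two_pi_pos).2 hc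
  obtain ⟨n, hn⟩ :=
    ((tendsto_measure_iUnion_atTop (μ := volume) hmono).eventually (lt_mem_nhds hvol)).exists
  exact ⟨1 / ((n : ℝ) + 1), by positivity, hn⟩

/-- For each `m ≥ 0` and `c ∈ (0, 2π)` there is `C > 0`, depending only on `m` and `c`,
such that for every polynomial `p(ν) = Σ_{k=0}^m A_k ν^k` with `Σ |A_k| = 1`, the
arc-length measure of `{ν ∈ S¹ : |p(ν)| ≥ C}` exceeds `c`. The circle is parametrized
by `ν = e^{iθ}`, `θ ∈ [0, 2π)`, so arc-length measure is Lebesgue measure in `θ`. -/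
theorem statement7 (m : ℕ) (c : ℝ) (hc : 0 < c) (hc2 : c < 2 * Real.pi) :
    ∃ C : ℝ, 0 < C ∧ ∀ A : Fin (m + 1) → ℂ, (∑ k, ‖A k‖) = 1 →
      ENNReal.ofReal c < volume {θ : ℝ | θ ∈ Set.Ico 0 (2 * Real.pi) ∧
        C ≤ ‖∑ k : Fin (m + 1), A k * Complex.exp ((θ : ℂ) * Complex.I) ^ (k : ℕ)‖} := by
  have hK : IsCompact {A : Fin (m + 1) → ℂ | ∑ k, ‖A k‖ = 1} := by
    refine (isCompact_closedBall (0 : Fin (m + 1) → ℂ) 1).of_isClosed_subset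
      (isClosed_eq (by fun_prop) continuous_const) fun A hA => ?_
    rw [mem_closedBall_zero_iff, pi_norm_le_iff_of_nonneg zero_le_one]
    intro k
    rw [← show ∑ k, ‖A k‖ = 1 from hA]
    exact Finset.single_le_sum (f := fun k => ‖A k‖) (fun _ _ => norm_nonneg _) (mem_univ k)
  refine hK.induction_on (p := fun S => ∃ C : ℝ, 0 < C ∧ ∀ A ∈ S,
      ENNReal.ofReal c < volume {θ : ℝ | θ ∈ Set.Ico 0 (2 * Real.pi) ∧
        C ≤ ‖∑ k : Fin (m + 1), A k * Complex.exp ((θ : ℂ) * Complex.I) ^ (k : ℕ)‖})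
    ⟨1, one_pos, by simp⟩ ?_ ?_ ?_
  · rintro S T hST ⟨C, hC, h⟩
    exact ⟨C, hC, fun A hA => h A (hST hA)⟩
  · rintro S T ⟨C, hC, h⟩ ⟨D, hD, h'⟩
    refine ⟨min C D, lt_min hC hD, ?_⟩
    rintro A (hA | hA)
    · exact (h A hA).trans_le (measure_mono fun θ hθ => ⟨hθ.1, (min_le_left _ _).trans hθ.2⟩)
    · exact (h' A hA).trans_le (measure_mono fun θ hθ => ⟨hθ.1, (min_le_right _ _).trans hθ.2⟩)
  · intro A hA
    have hA0 : A ≠ 0 := by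
      rintro rfl
      simp at hA
    obtain ⟨C, hC, hvol⟩ := exists_lt_volume_le_norm_sum_mul_exp_pow hA0 hc2
    have hcont : Continuous fun B : Fin (m + 1) → ℂ => ∑ k, ‖A k - B k‖ := by fun_prop
    have hnear : {B : Fin (m + 1) → ℂ | ∑ k, ‖A k - B k‖ < C / 2} ∈ nhds A :=
      (isOpen_lt hcont continuous_const).mem_nhds (by simpa using hC)
    refine ⟨_, mem_nhdsWithin_of_mem_nhds hnear, C / 2, half_pos hC, fun B hB => ?_⟩
    refine hvol.trans_le (measure_mono fun θ hθ => ⟨hθ.1, ?_⟩)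
    set z := Complex.exp ((θ : ℂ) * Complex.I) with hz
    have hz1 : ‖z‖ = 1 := Complex.norm_exp_ofReal_mul_I θ
    have hdiff : ‖∑ k, A k * z ^ (k : ℕ) - ∑ k, B k * z ^ (k : ℕ)‖ ≤ ∑ k, ‖A k - B k‖ := by
      rw [← Finset.sum_sub_distrib]
      refine (norm_sum_le _ _).trans (Finset.sum_le_sum fun k _ => ?_)
      rw [← sub_mul, norm_mul, norm_pow, hz1, one_pow, mul_one]
    have hB' : ∑ k, ‖A k - B k‖ < C / 2 := hB
    have htri := norm_sub_norm_le (∑ k, A k * z ^ (k : ℕ)) (∑ k, B k * z ^ (k : ℕ))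
    have hθC : C ≤ ‖∑ k, A k * z ^ (k : ℕ)‖ := hθ.2
    linarith
end

section
/- Let f : (0,∞) → [0,∞) be a positive decreasing function and let ε > 0. If f(2τ) ≥ 2^{−1+ε} f(τ) for all τ > 0, then there exists a constant C = C(ε) such that ∫_0^a f(τ) dτ ≤ C a f(a) for all 0 < a < ∞. -/
open MeasureTheory

/-- If `f` is nonincreasing on `(0, ∞)`, integrable on `(0, a)`, and satisfies
`k / 2 * f τ ≤ f (2 * τ)` for some `k ≥ 0`, then `(k - 1) ∫₀ᵃ f ≤ a f(a)`. -/
theorem sub_one_mul_intervalIntegral_le_mul_of_doubling {f : ℝ → ℝ} {k a : ℝ} (hk : 0 ≤ k)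
    (hanti : ∀ s t : ℝ, 0 < s → s ≤ t → f t ≤ f s)
    (hdouble : ∀ τ : ℝ, 0 < τ → k / 2 * f τ ≤ f (2 * τ))
    (ha : 0 < a) (hint : IntervalIntegrable f volume 0 a) :
    (k - 1) * ∫ τ in (0 : ℝ)..a, f τ ≤ a * f a := by
  have hleft : IntervalIntegrable f volume 0 (a / 2) :=
    hint.mono_set (by
      rw [Set.uIcc_of_le ha.le, Set.uIcc_of_le (by linarith)]
      exact Set.Icc_subset_Icc_right (by linarith))
  have hright : IntervalIntegrable f volume (a / 2) a :=
    hint.mono_set (by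
      rw [Set.uIcc_of_le ha.le, Set.uIcc_of_le (by linarith)]
      exact Set.Icc_subset_Icc_left (by linarith))
  have hsplit := intervalIntegral.integral_add_adjacent_intervals hleft hright
  have hscaled : IntervalIntegrable (fun τ => f (2 * τ)) volume 0 (a / 2) := by
    simpa using hint.comp_mul_left (c := 2)
  have hsubst : ∫ τ in (0 : ℝ)..(a / 2), f (2 * τ) = 2⁻¹ * ∫ τ in (0 : ℝ)..a, f τ := by
    rw [intervalIntegral.integral_comp_mul_left f two_ne_zero, mul_zero,
      mul_div_cancel₀ a two_ne_zero, smul_eq_mul]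
  have hnear : k / 2 * ∫ τ in (0 : ℝ)..(a / 2), f τ ≤ 2⁻¹ * ∫ τ in (0 : ℝ)..a, f τ := by
    rw [← hsubst, ← intervalIntegral.integral_const_mul]
    exact intervalIntegral.integral_mono_on_of_le_Ioo (by linarith) (hleft.const_mul _) hscaled
      fun τ hτ => hdouble τ hτ.1
  have hfar : ∫ τ in (a / 2)..a, f τ ≤ a / 2 * f (a / 2) := by
    calc ∫ τ in (a / 2)..a, f τ ≤ ∫ _ in (a / 2)..a, f (a / 2) :=
          intervalIntegral.integral_mono_on (by linarith) hright intervalIntegrable_const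
            fun τ hτ => hanti _ _ (by linarith) hτ.1
      _ = a / 2 * f (a / 2) := by
          rw [intervalIntegral.integral_const, smul_eq_mul]; ring
  have hhalf : k / 2 * f (a / 2) ≤ f a := by
    simpa [mul_div_cancel₀] using hdouble (a / 2) (by linarith)
  have hfar' := mul_le_mul_of_nonneg_left hfar hk
  have hhalf' := mul_le_mul_of_nonneg_left hhalf ha.le
  rw [← hsplit] at hnear ⊢
  linarith

/-- Proposition 7.1(ii): if `f : (0,∞) → [0,∞)` is decreasing and satisfies
`f(2τ) ≥ 2^{−1+ε} f(τ)` for all `τ > 0`, then there is `C = C(ε)` with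
`∫_0^a f(τ) dτ ≤ C a f(a)` for all `0 < a < ∞`. -/
theorem statement13 (ε : ℝ) (hε : 0 < ε) :
    ∃ C : ℝ, ∀ f : ℝ → ℝ,
      (∀ τ : ℝ, 0 < τ → 0 ≤ f τ) →
      (∀ s t : ℝ, 0 < s → s ≤ t → f t ≤ f s) →
      (∀ τ : ℝ, 0 < τ → 2 ^ (-1 + ε : ℝ) * f τ ≤ f (2 * τ)) →
      ∀ a : ℝ, 0 < a → (∫ τ in Set.Ioo 0 a, f τ) ≤ C * (a * f a) := by
  have hk : (1 : ℝ) < 2 ^ ε := Real.one_lt_rpow one_lt_two hε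
  have hpow : (2 : ℝ) ^ (-1 + ε) = 2 ^ ε / 2 := by
    rw [Real.rpow_add two_pos, Real.rpow_neg_one]; ring
  refine ⟨(2 ^ ε - 1)⁻¹, fun f hnonneg hanti hdouble a ha => ?_⟩
  by_cases hint : IntegrableOn f (Set.Ioo 0 a)
  · rw [← integral_Ioc_eq_integral_Ioo, ← intervalIntegral.integral_of_le ha.le,
      le_inv_mul_iff₀ (sub_pos.2 hk)]
    exact sub_one_mul_intervalIntegral_le_mul_of_doubling (by linarith) hanti
      (fun τ hτ => hpow ▸ hdouble τ hτ) ha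
      ((intervalIntegrable_iff_integrableOn_Ioo_of_le ha.le).2 hint)
  · rw [integral_undef hint]
    exact mul_nonneg (inv_nonneg.2 (sub_pos.2 hk).le) (mul_nonneg ha.le (hnonneg a ha))
end

section
/- Fix Q, ε, ν > 0, N ≥ 0 and 0 ≤ a < ∞. Suppose f : [0,∞) → [0,∞) is either (a) increasing with f(2τ) ≤ 2^Q f(τ) for all τ ≥ 0, or (b) decreasing with f(2τ) ≥ 2^{−1+Q} f(τ) for all τ ≥ 0. Then ∫_a^∞ f(τ) τ^N e^{−ε τ^ν} dτ ≤ C f(1), where the constant C depends only on Q, ε, ν and N, and is independent of f and a. -/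
open MeasureTheory

/-- An increasing function with `f (2 * τ) ≤ 2 ^ Q * f τ` grows at most like `τ ^ Q`. -/
lemma le_of_increasing_doubling {Q : ℝ} (hQ : 0 < Q) {f : ℝ → ℝ}
    (hf : ∀ τ : ℝ, 0 ≤ τ → 0 ≤ f τ)
    (hmono : ∀ s t : ℝ, 0 ≤ s → s ≤ t → f s ≤ f t)
    (hdbl : ∀ τ : ℝ, 0 ≤ τ → f (2 * τ) ≤ 2 ^ Q * f τ) {τ : ℝ} (hτ : 0 < τ) :
    f τ ≤ (1 + 2 ^ Q * τ ^ Q) * f 1 := by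
  have hf1 : 0 ≤ f 1 := hf 1 zero_le_one
  rcases le_total τ 1 with h | h
  · have h1 := hmono τ 1 hτ.le h
    have h2 : 0 ≤ 2 ^ Q * τ ^ Q * f 1 := by positivity
    linarith
  · have hpow : ∀ n : ℕ, f (2 ^ n) ≤ (2 ^ n : ℝ) ^ Q * f 1 := by
      intro n
      induction n with
      | zero => simp
      | succ n ih =>
        rw [pow_succ', Real.mul_rpow (by positivity) (by positivity), mul_assoc]
        exact (hdbl _ (by positivity)).trans (by gcongr)
    obtain ⟨n, hn, hn'⟩ := exists_nat_pow_near h one_lt_two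
    calc f τ ≤ f (2 ^ (n + 1)) := hmono _ _ hτ.le hn'.le
      _ ≤ (2 ^ (n + 1) : ℝ) ^ Q * f 1 := hpow _
      _ ≤ (2 * τ) ^ Q * f 1 := by
        rw [pow_succ']
        gcongr
      _ = 2 ^ Q * τ ^ Q * f 1 := by rw [Real.mul_rpow zero_le_two hτ.le]
      _ ≤ (1 + 2 ^ Q * τ ^ Q) * f 1 := by gcongr; linarith

/-- A decreasing function with `2 ^ (-p) * f τ ≤ f (2 * τ)` grows at most like `τ ^ (-p)`
at the origin. -/
lemma le_of_decreasing_doubling {p : ℝ} (hp : 0 ≤ p) {f : ℝ → ℝ}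
    (hf : ∀ τ : ℝ, 0 ≤ τ → 0 ≤ f τ)
    (hanti : ∀ s t : ℝ, 0 ≤ s → s ≤ t → f t ≤ f s)
    (hdbl : ∀ τ : ℝ, 0 ≤ τ → 2 ^ (-p) * f τ ≤ f (2 * τ)) {τ : ℝ} (hτ : 0 < τ) :
    f τ ≤ (1 + 2 ^ p * τ ^ (-p)) * f 1 := by
  have hf1 : 0 ≤ f 1 := hf 1 zero_le_one
  rcases le_total 1 τ with h | h
  · have h1 := hanti 1 τ zero_le_one h
    have h2 : 0 ≤ 2 ^ p * τ ^ (-p) * f 1 := by positivity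
    linarith
  · have hpow : ∀ n : ℕ, f τ ≤ (2 ^ n : ℝ) ^ p * f (2 ^ n * τ) := by
      intro n
      induction n with
      | zero => simp
      | succ n ih =>
        refine ih.trans ?_
        have h1 := hdbl (2 ^ n * τ) (by positivity)
        rw [Real.rpow_neg zero_le_two, inv_mul_le_iff₀ (by positivity)] at h1
        rw [pow_succ, Real.mul_rpow (by positivity) (by positivity), mul_assoc,
          mul_comm (2 ^ n : ℝ) 2, mul_assoc 2]
        gcongr
    obtain ⟨n, hn, hn'⟩ := exists_nat_pow_near (one_le_inv₀ hτ |>.2 h) one_lt_two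
    calc f τ ≤ (2 ^ (n + 1) : ℝ) ^ p * f (2 ^ (n + 1) * τ) := hpow _
      _ ≤ (2 ^ (n + 1) : ℝ) ^ p * f 1 := by
        gcongr
        exact hanti _ _ zero_le_one ((inv_le_iff_one_le_mul₀ hτ).1 hn'.le)
      _ ≤ (2 * τ⁻¹) ^ p * f 1 := by
        rw [pow_succ']
        gcongr
      _ = 2 ^ p * τ ^ (-p) * f 1 := by
        rw [Real.mul_rpow zero_le_two (by positivity), Real.inv_rpow hτ.le, Real.rpow_neg hτ.le]
      _ ≤ (1 + 2 ^ p * τ ^ (-p)) * f 1 := by gcongr; linarith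

/-- Proposition 7.2: fix `Q, ε, ν > 0`, `N ≥ 0` and `0 ≤ a < ∞`. If `f : [0,∞) → [0,∞)`
is either (a) increasing with `f(2τ) ≤ 2^Q f(τ)`, or (b) decreasing with
`f(2τ) ≥ 2^{−1+Q} f(τ)`, then `∫_a^∞ f(τ) τ^N e^{−ε τ^ν} dτ ≤ C f(1)` where `C`
depends only on `Q, ε, ν, N` (not on `f` or `a`). -/
theorem statement14 (Q ε ν N : ℝ) (hQ : 0 < Q) (hε : 0 < ε) (hν : 0 < ν)
    (hN : 0 ≤ N) :
    ∃ C : ℝ, ∀ f : ℝ → ℝ,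
      (∀ τ : ℝ, 0 ≤ τ → 0 ≤ f τ) →
      (((∀ s t : ℝ, 0 ≤ s → s ≤ t → f s ≤ f t) ∧
          ∀ τ : ℝ, 0 ≤ τ → f (2 * τ) ≤ 2 ^ Q * f τ) ∨
        ((∀ s t : ℝ, 0 ≤ s → s ≤ t → f t ≤ f s) ∧
          ∀ τ : ℝ, 0 ≤ τ → 2 ^ (-1 + Q : ℝ) * f τ ≤ f (2 * τ))) →
      ∀ a : ℝ, 0 ≤ a →
        (∫ τ in Set.Ioi a, f τ * τ ^ N * Real.exp (-ε * τ ^ ν)) ≤ C * f 1 := by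
  obtain ⟨p, hp0, hp1, hpQ⟩ : ∃ p : ℝ, 0 ≤ p ∧ p < 1 ∧ -p ≤ -1 + Q :=
    ⟨max 0 (1 - Q), le_max_left _ _, max_lt one_pos (by linarith),
      by linarith [le_max_right 0 (1 - Q)]⟩
  set w : ℝ → ℝ := fun τ ↦ 1 + 2 ^ Q * τ ^ Q + 2 ^ p * τ ^ (-p) with hw
  set g : ℝ → ℝ := fun τ ↦ w τ * τ ^ N * Real.exp (-ε * τ ^ ν) with hg
  have hg0 : ∀ τ ∈ Set.Ioi (0 : ℝ), 0 ≤ g τ := by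
    intro τ hτ
    have hτ' : 0 < τ := hτ
    simp only [hg, hw]
    positivity
  have hgint : IntegrableOn g (Set.Ioi 0) := by
    have key : ∀ s : ℝ, -1 < s →
        IntegrableOn (fun τ : ℝ ↦ τ ^ s * Real.exp (-ε * τ ^ ν)) (Set.Ioi 0) :=
      fun s hs ↦ integrableOn_rpow_mul_exp_neg_mul_rpow hs hν hε
    refine (((key N (by linarith)).add ((key (Q + N) (by linarith)).const_mul (2 ^ Q))).add
      ((key (-p + N) (by linarith)).const_mul (2 ^ p))).congr_fun ?_ measurableSet_Ioi
    intro τ hτ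
    simp only [hg, hw, Pi.add_apply, Real.rpow_add hτ]
    ring
  refine ⟨∫ τ in Set.Ioi 0, g τ, fun f hf h a ha ↦ ?_⟩
  have hf1 : 0 ≤ f 1 := hf 1 zero_le_one
  have hfw : ∀ τ : ℝ, 0 < τ → f τ ≤ w τ * f 1 := by
    intro τ hτ
    rcases h with ⟨hmono, hdbl⟩ | ⟨hanti, hdbl⟩
    · refine (le_of_increasing_doubling hQ hf hmono hdbl hτ).trans ?_
      gcongr
      exact le_add_of_nonneg_right (by positivity)
    · have hdbl' : ∀ t : ℝ, 0 ≤ t → 2 ^ (-p) * f t ≤ f (2 * t) := fun t ht ↦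
        (mul_le_mul_of_nonneg_right (Real.rpow_le_rpow_of_exponent_le one_le_two hpQ)
          (hf t ht)).trans (hdbl t ht)
      refine (le_of_decreasing_doubling hp0 hf hanti hdbl' hτ).trans ?_
      have : 0 ≤ (2 : ℝ) ^ Q * τ ^ Q := by positivity
      gcongr
      simp only [hw]
      linarith
  have hsub : Set.Ioi a ⊆ Set.Ioi 0 := Set.Ioi_subset_Ioi ha
  calc ∫ τ in Set.Ioi a, f τ * τ ^ N * Real.exp (-ε * τ ^ ν)
      ≤ ∫ τ in Set.Ioi a, g τ * f 1 := by
        refine integral_mono_of_nonneg ?_ ((hgint.mono_set hsub).mul_const _) ?_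
        · filter_upwards [ae_restrict_mem measurableSet_Ioi] with τ hτ
          have hτ' : 0 < τ := hsub hτ
          have := hf τ hτ'.le
          simp only [Pi.zero_apply]
          positivity
        · filter_upwards [ae_restrict_mem measurableSet_Ioi] with τ hτ
          have hτ' : 0 < τ := hsub hτ
          calc f τ * τ ^ N * Real.exp (-ε * τ ^ ν)
              ≤ w τ * f 1 * τ ^ N * Real.exp (-ε * τ ^ ν) := by
                gcongr
                exact hfw τ hτ'
            _ = g τ * f 1 := by simp only [hg]; ring
    _ = (∫ τ in Set.Ioi a, g τ) * f 1 := integral_mul_const _ _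
    _ ≤ (∫ τ in Set.Ioi 0, g τ) * f 1 := by
        refine mul_le_mul_of_nonneg_right ?_ hf1
        exact setIntegral_mono_set hgint
          ((ae_restrict_mem measurableSet_Ioi).mono hg0) hsub.eventuallyLE
end
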